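/- arXiv:1107.2888 — 4 statements merged into one kernel-verified Lean document; each statement's English description precedes it below -/
import Mathlib

section
/- For every ε > 0 there exists N such that for every prime number p ≥ N the following two assertions hold: (i) every 2-coloring c of Z_p satisfies M_4(p,c) ≥ (7/96)·p²; and (ii) there exists a 2-coloring c of Z_p with M_4(p,c) ≤ (17/150 + ε)·p². -/
/-- Number of monochromatic `k`-APs in `Z_n` under the 2-coloring `c`:
pairs `(a,d)` with `c a = c (a+d) = ⋯ = c (a+(k-1)d)`. -/
noncomputable def monoAPCount (n k : ℕ) (c : ZMod n → Fin 2) : ℕ :=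
  Set.ncard {p : ZMod n × ZMod n | ∀ i < k, c (p.1 + i • p.2) = c p.1}

namespace SignPoly

/-- All index lists are strictly decreasing with entries below `n`. -/
def sorted : ℕ → List ℕ → Bool
  | _, [] => true
  | n, i :: S => Nat.blt i n && sorted i S

def low (k : ℕ) (P : List (ℤ × List ℕ)) : List (ℤ × List ℕ) :=
  P.filter fun t => match t.2 with
    | [] => true
    | i :: _ => !Nat.beq i k

def high (k : ℕ) (P : List (ℤ × List ℕ)) : List (ℤ × List ℕ) :=
  P.filterMap fun t => match t.2 with
    | [] => none
    | i :: S => bif Nat.beq i k then some (t.1, S) else none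

def packed (b : ℕ) : ℕ → List (ℤ × List ℕ) → ℤ
  | 0, P => (P.map Prod.fst).sum
  | k + 1, P => match P with
    | [] => 0
    | _ :: _ =>
      (packed b k (low k P) + packed b k (high k P)) +
        ((b ^ 2 ^ k : ℕ) : ℤ) * (packed b k (low k P) - packed b k (high k P))

/-- Certifies that `P + K` is nonnegative on all sign vectors of length `n`. -/
def check (w n K : ℕ) (P : List (ℤ × List ℕ)) : Bool :=
  P.all (fun t => sorted n t.2) &&
  Nat.ble ((P.map fun t => t.1.natAbs).sum + K + 1) (2 ^ w) &&
  Nat.beq (Nat.land (packed (2 ^ (w + 1)) n (((K + 2 ^ w : ℕ), []) :: P)).toNat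
      (packed (2 ^ (w + 1)) n [((2 ^ w : ℕ), [])]).toNat)
    (packed (2 ^ (w + 1)) n [((2 ^ w : ℕ), [])]).toNat

def copies (m : ℕ) (c : List ℕ) (rows : List (List ℤ)) : List (ℤ × List ℕ) :=
  rows.zipIdx.flatMap fun R => R.1.zipIdx.flatMap fun W =>
    [(W.1, c.map fun x => W.2 + (R.2 + 1) * x),
     (W.1, (c.map fun x => m - (W.2 + (R.2 + 1) * x)).reverse)]

def eval (P : List (ℤ × List ℕ)) (σ : ℕ → ℤ) : ℤ :=
  (P.map fun t => t.1 * (t.2.map σ).prod).sum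

theorem eval_cons (t : ℤ × List ℕ) (P : List (ℤ × List ℕ)) (σ : ℕ → ℤ) :
    eval (t :: P) σ = t.1 * (t.2.map σ).prod + eval P σ := by
  simp [eval]

theorem lt_of_sorted {n : ℕ} {S : List ℕ} (h : sorted n S = true) : ∀ i ∈ S, i < n := by
  induction S generalizing n with
  | nil => simp
  | cons i S ih =>
    simp only [sorted, Bool.and_eq_true, Nat.blt_eq] at h
    intro j hj
    rcases List.mem_cons.1 hj with rfl | hj
    · exact h.1
    · exact (ih h.2 j hj).trans h.1

theorem eval_eq_low_add_high (k : ℕ) (P : List (ℤ × List ℕ)) (σ : ℕ → ℤ) :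
    eval P σ = eval (low k P) σ + σ k * eval (high k P) σ := by
  induction P with
  | nil => simp [low, high, eval]
  | cons t P ih =>
    obtain ⟨w, S⟩ := t
    cases S with
    | nil =>
      have h₁ : low k ((w, []) :: P) = (w, []) :: low k P := by simp [low]
      have h₂ : high k ((w, []) :: P) = high k P := by simp [high]
      rw [h₁, h₂, eval_cons, eval_cons, ih]
      ring
    | cons i S =>
      by_cases hi : i = k
      · have h₁ : low k ((w, i :: S) :: P) = low k P := by simp [low, hi]
        have h₂ : high k ((w, i :: S) :: P) = (w, S) :: high k P := by simp [high, hi]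
        rw [h₁, h₂, eval_cons, eval_cons, ih, hi]
        simp only [List.map_cons, List.prod_cons]
        ring
      · have hb : Nat.beq i k = false := by rwa [Bool.eq_false_iff, ne_eq, Nat.beq_eq]
        have h₁ : low k ((w, i :: S) :: P) = (w, i :: S) :: low k P := by simp [low, hb]
        have h₂ : high k ((w, i :: S) :: P) = high k P := by simp [high, hb]
        rw [h₁, h₂, eval_cons, eval_cons, ih]
        ring

theorem sorted_low {k : ℕ} {P : List (ℤ × List ℕ)} (h : ∀ t ∈ P, sorted (k + 1) t.2 = true) :
    ∀ t ∈ low k P, sorted k t.2 = true := by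
  rintro ⟨w, S⟩ ht
  obtain ⟨ht, hk⟩ := List.mem_filter.1 ht
  have := h _ ht
  cases S with
  | nil => rfl
  | cons i S =>
    have hk : i ≠ k := fun e => by simp [e] at hk
    simp only [sorted, Bool.and_eq_true, Nat.blt_eq] at this ⊢
    exact ⟨by omega, this.2⟩

theorem sorted_high {k : ℕ} {P : List (ℤ × List ℕ)} (h : ∀ t ∈ P, sorted (k + 1) t.2 = true) :
    ∀ t ∈ high k P, sorted k t.2 = true := by
  intro t ht
  obtain ⟨⟨w, S⟩, hs, he⟩ := List.mem_filterMap.1 ht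
  have := h _ hs
  cases S with
  | nil => simp at he
  | cons i S =>
    by_cases hi : i = k
    · simp [hi] at he
      subst he
      simp [sorted] at this
      simpa [hi] using this.2
    · have hb : Nat.beq i k = false := by rwa [Bool.eq_false_iff, ne_eq, Nat.beq_eq]
      simp [hb] at he

theorem eval_congr {n : ℕ} {P : List (ℤ × List ℕ)} (h : ∀ t ∈ P, sorted n t.2 = true)
    {σ τ : ℕ → ℤ} (hσ : ∀ i < n, σ i = τ i) : eval P σ = eval P τ := by
  unfold eval
  congr 1
  refine List.map_congr_left fun t ht => ?_
  congr 2
  exact List.map_congr_left fun i hi => hσ i (lt_of_sorted (h t ht) i hi)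

/-- The sign vector whose negative entries are the binary digits of `j` equal to one. -/
def signs (j i : ℕ) : ℤ := if j.testBit i then -1 else 1

theorem packed_eq_sum (b k : ℕ) (P : List (ℤ × List ℕ)) (h : ∀ t ∈ P, sorted k t.2 = true) :
    packed b k P = ∑ j ∈ Finset.range (2 ^ k), eval P (signs j) * (b : ℤ) ^ j := by
  induction k generalizing P with
  | zero =>
    simp only [packed, pow_zero, Finset.range_one, Finset.sum_singleton, mul_one, eval]
    congr 1
    refine List.map_congr_left fun t ht => ?_
    have := h t ht
    rcases hS : t.2 with _ | ⟨i, S⟩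
    · simp
    · simp [hS, sorted] at this
  | succ k ih =>
    have key : packed b (k + 1) P = (packed b k (low k P) + packed b k (high k P)) +
        ((b ^ 2 ^ k : ℕ) : ℤ) * (packed b k (low k P) - packed b k (high k P)) := by
      cases P with
      | nil =>
        have : packed b k [] = 0 := by cases k <;> simp [packed]
        simp [low, high, this, packed]
      | cons t P => rfl
    rw [key, ih _ (sorted_low h), ih _ (sorted_high h), pow_succ, mul_two, Finset.sum_range_add,
      ← Finset.sum_add_distrib, ← Finset.sum_sub_distrib, Finset.mul_sum]
    congr 1
    · refine Finset.sum_congr rfl fun j hj => ?_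
      have hj := Finset.mem_range.1 hj
      rw [eval_eq_low_add_high k P, signs, Nat.testBit_lt_two_pow hj]
      simp only [Bool.false_eq_true, if_false]
      ring
    · refine Finset.sum_congr rfl fun j hj => ?_
      have hj := Finset.mem_range.1 hj
      have hs : ∀ i < k, signs (2 ^ k + j) i = signs j i := fun i hi => by
        simp only [signs, Nat.testBit_two_pow_add_gt hi]
      rw [eval_eq_low_add_high k P, eval_congr (sorted_low h) hs, eval_congr (sorted_high h) hs,
        signs, Nat.testBit_two_pow_add_eq, Nat.testBit_lt_two_pow hj]
      simp only [Bool.not_false, if_true]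
      push_cast
      ring

theorem sum_mul_pow_lt {b : ℕ} (t : ℕ → ℕ) (N : ℕ) (ht : ∀ j < N, t j < b) :
    ∑ i ∈ Finset.range N, t i * b ^ i < b ^ N := by
  induction N with
  | zero => simp
  | succ N ih =>
    rw [Finset.sum_range_succ, pow_succ]
    have h₁ := ih fun j hj => ht j (hj.trans N.lt_succ_self)
    have h₂ : (t N + 1) * b ^ N ≤ b * b ^ N := Nat.mul_le_mul_right _ (ht N N.lt_succ_self)
    nlinarith

theorem sum_mul_pow_div_mod {b : ℕ} (t : ℕ → ℕ) {N : ℕ} (ht : ∀ j < N, t j < b) {j : ℕ}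
    (hj : j < N) : (∑ i ∈ Finset.range N, t i * b ^ i) / b ^ j % b = t j := by
  have hb : 0 < b := (Nat.zero_le _).trans_lt (ht j hj)
  obtain ⟨n, rfl⟩ := Nat.exists_eq_add_of_lt hj
  rw [add_assoc, Finset.sum_range_add, Finset.sum_range_succ']
  have h₁ : ∑ i ∈ Finset.range n, t (j + (i + 1)) * b ^ (j + (i + 1)) =
      b ^ j * (b * ∑ i ∈ Finset.range n, t (j + (i + 1)) * b ^ i) := by
    rw [Finset.mul_sum, Finset.mul_sum]
    exact Finset.sum_congr rfl fun i _ => by ring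
  have h₂ := sum_mul_pow_lt t j fun i hi => ht i (hi.trans hj)
  rw [h₁, add_zero, show ∀ A S, A + (b ^ j * (b * S) + t j * b ^ j) = A + b ^ j * (t j + b * S) from
    fun A S => by ring, Nat.add_mul_div_left _ _ (pow_pos hb j), Nat.div_eq_of_lt h₂, zero_add,
    Nat.add_mul_mod_self_left, Nat.mod_eq_of_lt (ht j hj)]

theorem testBit_sum_mul_pow {w N : ℕ} (t : ℕ → ℕ) (ht : ∀ j < N, t j < 2 ^ (w + 1)) {j : ℕ}
    (hj : j < N) : (∑ i ∈ Finset.range N, t i * (2 ^ (w + 1)) ^ i).testBit ((w + 1) * j + w) =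
      (t j).testBit w := by
  conv_rhs => rw [← sum_mul_pow_div_mod t ht hj]
  rw [Nat.testBit_mod_two_pow, ← pow_mul, Nat.testBit_div_two_pow, add_comm w (_ * j)]
  simp

theorem natAbs_eval_le (P : List (ℤ × List ℕ)) {σ : ℕ → ℤ} (hσ : ∀ i, (σ i).natAbs = 1) :
    (eval P σ).natAbs ≤ (P.map fun t => t.1.natAbs).sum := by
  induction P with
  | nil => simp [eval]
  | cons t P ih =>
    have h : ((t.2.map σ).prod).natAbs = 1 := by
      induction t.2 with
      | nil => rfl
      | cons i S ihS => simp [Int.natAbs_mul, hσ, ihS]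
    rw [eval_cons, List.map_cons, List.sum_cons]
    refine (Int.natAbs_add_le _ _).trans ?_
    rw [Int.natAbs_mul, h, mul_one]
    omega

theorem eval_ge_of_check {w n K : ℕ} {P : List (ℤ × List ℕ)} (h : check w n K P = true)
    {σ : ℕ → ℤ} (hσ : ∀ i, σ i = 1 ∨ σ i = -1) : -(K : ℤ) ≤ eval P σ := by
  simp only [check, Bool.and_eq_true, List.all_eq_true, Nat.ble_eq, Nat.beq_eq] at h
  obtain ⟨⟨hs, hsum⟩, hland⟩ := h
  set u : ℕ → ℕ := fun j => (eval P (signs j) + K + 2 ^ w).toNat with hu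
  have hsig : ∀ j i, (signs j i).natAbs = 1 := fun j i => by unfold signs; split_ifs <;> rfl
  have hub : ∀ j, (u j : ℤ) = eval P (signs j) + K + 2 ^ w ∧ u j < 2 ^ (w + 1) := fun j => by
    have := natAbs_eval_le P (hsig j)
    have hz : ((2 ^ w : ℕ) : ℤ) = 2 ^ w := by push_cast; rfl
    simp only [hu, pow_succ]
    omega
  have hT : (packed (2 ^ (w + 1)) n (((K + 2 ^ w : ℕ), []) :: P)).toNat =
      ∑ j ∈ Finset.range (2 ^ n), u j * (2 ^ (w + 1)) ^ j := by
    rw [packed_eq_sum, ← Int.toNat_natCast (∑ j ∈ Finset.range (2 ^ n), _)]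
    · congr 1
      push_cast
      refine Finset.sum_congr rfl fun j _ => ?_
      rw [(hub j).1, eval_cons]
      simp
      ring
    · intro t ht
      rcases List.mem_cons.1 ht with rfl | ht
      · rfl
      · exact hs t ht
  have hM : (packed (2 ^ (w + 1)) n [((2 ^ w : ℕ), [])]).toNat =
      ∑ j ∈ Finset.range (2 ^ n), 2 ^ w * (2 ^ (w + 1)) ^ j := by
    rw [packed_eq_sum, ← Int.toNat_natCast (∑ j ∈ Finset.range (2 ^ n), _)]
    · congr 1
      push_cast
      refine Finset.sum_congr rfl fun j _ => ?_
      simp [eval]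
    · intro t ht
      rw [List.mem_singleton.1 ht]
      rfl
  rw [hT, hM] at hland
  set j := Nat.ofBits fun i : Fin n => decide (σ i = -1) with hj
  have hjn : j < 2 ^ n := Nat.ofBits_lt_two_pow _
  have hσj : ∀ i < n, σ i = signs j i := fun i hi => by
    rw [signs, hj, Nat.testBit_ofBits_lt _ _ hi]
    rcases hσ i with h | h <;> simp [h]
  have hbit : (u j).testBit w = true := by
    have := congrArg (fun x => Nat.testBit x ((w + 1) * j + w)) hland
    change (Nat.testBit (_ &&& _) _ = _) at this
    rw [Nat.testBit_and, testBit_sum_mul_pow u (fun j _ => (hub j).2) hjn,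
      testBit_sum_mul_pow (fun _ => 2 ^ w) (fun _ _ => Nat.pow_lt_pow_right one_lt_two w.lt_succ_self)
        hjn] at this
    simpa using this
  have h2 := Nat.ge_two_pow_of_testBit hbit
  have h3 := (hub j).1
  rw [eval_congr hs hσj]
  zify at h2
  linarith

/-! ### Averaging sign polynomials over arithmetic progressions -/

section Average

variable {p : ℕ} [Fact p.Prime]

def apSum (f : ZMod p → ℤ) (l : List (ZMod p)) : ℤ :=
  ∑ a : ZMod p, ∑ r : ZMod p, (l.map fun z => f (a + z * r)).prod

theorem apSum_affine (f : ZMod p → ℤ) (l : List (ZMod p)) (s : ZMod p) {d : ZMod p} (hd : d ≠ 0) :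
    apSum f (l.map fun z => s + d * z) = apSum f l := by
  unfold apSum
  rw [Finset.sum_comm, Finset.sum_comm (f := fun a r => (l.map fun z => f (a + z * r)).prod),
    ← Equiv.sum_comp (Equiv.mulLeft₀ d hd)
      (fun r => ∑ a : ZMod p, (l.map fun z => f (a + z * r)).prod)]
  refine Finset.sum_congr rfl fun r _ => ?_
  rw [← Equiv.sum_comp (Equiv.addRight (s * r))
    (fun a => (l.map fun z => f (a + z * (Equiv.mulLeft₀ d hd r))).prod)]
  refine Finset.sum_congr rfl fun a _ => ?_
  rw [List.map_map]
  congr 1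
  refine List.map_congr_left fun z _ => ?_
  change f (a + (s + d * z) * r) = f (a + s * r + z * (d * r))
  congr 1
  ring

theorem apSum_perm (f : ZMod p → ℤ) {l l' : List (ZMod p)} (h : l.Perm l') :
    apSum f l = apSum f l' := by
  unfold apSum
  exact Finset.sum_congr rfl fun a _ => Finset.sum_congr rfl fun r _ => (h.map _).prod_eq

def weightedSum (f : ZMod p → ℤ) (P : List (ℤ × List ℕ)) : ℤ :=
  (P.map fun t => t.1 * apSum f (t.2.map Nat.cast)).sum

theorem sum_eval_eq_weightedSum (f : ZMod p → ℤ) (P : List (ℤ × List ℕ)) :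
    ∑ a : ZMod p, ∑ r : ZMod p, eval P (fun i => f (a + i * r)) = weightedSum f P := by
  induction P with
  | nil => simp [eval, weightedSum]
  | cons t P ih =>
    simp only [eval_cons, Finset.sum_add_distrib, ih, ← Finset.mul_sum]
    simp [weightedSum, apSum, Function.comp_def]

theorem weightedSum_flatMap {α : Type*} (f : ZMod p → ℤ) (l : List α)
    (g : α → List (ℤ × List ℕ)) :
    weightedSum f (l.flatMap g) = (l.map fun x => weightedSum f (g x)).sum := by
  induction l with
  | nil => rfl
  | cons x l ih => simp [weightedSum, List.flatMap_cons] at ih ⊢; rw [ih]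

theorem weightedSum_copies (f : ZMod p → ℤ) {m : ℕ} {c : List ℕ} {rows : List (List ℤ)}
    (h : ∀ t ∈ copies m c rows, sorted (m + 1) t.2 = true) (hp : rows.length < p) :
    weightedSum f (copies m c rows) = 2 * rows.flatten.sum * apSum f (c.map Nat.cast) := by
  have key : ∀ R ∈ rows.zipIdx, ∀ W ∈ R.1.zipIdx, weightedSum f
      [(W.1, c.map fun x => W.2 + (R.2 + 1) * x),
        (W.1, (c.map fun x => m - (W.2 + (R.2 + 1) * x)).reverse)] =
      2 * W.1 * apSum f (c.map Nat.cast) := by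
    intro R hR W hW
    have hd : ((R.2 + 1 : ℕ) : ZMod p) ≠ 0 := fun h0 => by
      have h1 := Nat.le_of_dvd R.2.succ_pos ((ZMod.natCast_eq_zero_iff _ _).1 h0)
      have h2 := List.snd_lt_of_mem_zipIdx hR
      omega
    have hle : ∀ x ∈ c, W.2 + (R.2 + 1) * x ≤ m := fun x hx => by
      have := lt_of_sorted (h (W.1, c.map fun x => W.2 + (R.2 + 1) * x)
        (List.mem_flatMap.2 ⟨R, hR, List.mem_flatMap.2 ⟨W, hW, by simp⟩⟩)) _
        (List.mem_map_of_mem (f := fun x => W.2 + (R.2 + 1) * x) hx)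
      omega
    have e₁ : apSum f ((c.map fun x => W.2 + (R.2 + 1) * x).map Nat.cast) =
        apSum f (c.map Nat.cast) := by
      rw [← apSum_affine f (c.map Nat.cast) W.2 hd]
      simp only [List.map_map]
      congr 1
      refine List.map_congr_left fun x _ => ?_
      simp
    have e₂ : apSum f ((c.map fun x => m - (W.2 + (R.2 + 1) * x)).reverse.map Nat.cast) =
        apSum f (c.map Nat.cast) := by
      rw [apSum_perm f ((List.reverse_perm _).map _),
        ← apSum_affine f (c.map Nat.cast) ((m : ZMod p) - W.2) (neg_ne_zero.2 hd)]
      simp only [List.map_map]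
      congr 1
      refine List.map_congr_left fun x hx => ?_
      simp only [Function.comp_apply, Nat.cast_sub (hle x hx)]
      push_cast
      ring
    simp only [weightedSum, List.map_cons, List.map_nil, List.sum_cons, List.sum_nil, e₁, e₂]
    ring
  unfold copies
  rw [weightedSum_flatMap, List.sum_flatten, ← List.sum_map_mul_left, ← List.sum_map_mul_right]
  conv_rhs => rw [← List.zipIdx_map_fst 0 rows, List.map_map]
  congr 1
  refine List.map_congr_left fun R hR => ?_
  rw [weightedSum_flatMap, List.map_congr_left (key R hR), List.sum_map_mul_right,
    List.sum_map_mul_left, List.zipIdx_map_fst]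
  rfl

end Average

def apRows : List (List ℤ) :=
    [[3944, 3036, 3149, 4992, 3512, 4211, 7401, 7987], [2711, 1776, 2793, 2711, 3369, 2315,
     2323], [10051, 3561, 5446, 8201, 5646], [3831, 2867, 3249, 2275], [10575, 4908], [3160]]

def pairRows : List (List ℤ) :=
    [[-153, 15, 10, -338, -225, -522, -409, -392, -214], [-1144, -986, -1606, -1375, -1198,
     -2533, -2718, -3706, -2248], [-823, -51, -575, -83, -498, -802, -1206, -520], [891, 979,
     3263, -853, 369, 1528, 3712, 1837], [253, 58, 227, 193, 158, 513, 161], [-1231, -1219, -526,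
     247, 661, -658, 10], [-63, -382, -67, -173, -597, -85], [667, -1147, -1448, -1192, -743,
     -876], [-279, -296, -376, -992, -480], [-305, -227, 372, 218, 60], [852, 662, 972, 1254],
     [-680, 411, 1137, 1395], [-127, 89, 130], [-152, -560, 105], [-483, -201], [920, 241],
     [-49], [551]]

def classesOfSpan4 : List (List ℕ × List (List ℤ)) := [
    ([4, 2, 1, 0], [[-83, 252, 207, 189, -37, -263, -71, -45, -438, -160, 92, -183, 6, -187,
     -179], [244, 262, 641, 561, 880, -78, -38, -194, -122, -109, -13], [-150, -229, -414, -353,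
     -497, -345, -666], [847, 278, 395]]),
    ([4, 3, 1, 0], [[-154, -385, -666, -408, -957, -2172, -2243, -1385], [-681, 404, 1573, 1169,
     2663, 118], [148, -616, -405, 305], [3077, 615]])]

def classesOfSpan5 : List (List ℕ × List (List ℤ)) := [
    ([5, 2, 1, 0], [[256, 525, -302, -478, -923, -860, -1075, -1425, -1111, -1048, -713, -943,
     -814, -1614], [215, -666, -181, 1187, 1517, 2325, 1191, 1693, 4557], [-326, -791, -308,
     112]]),
    ([5, 3, 1, 0], [[73, 278, 211, -106, 72, -168, 95, -227, 176, 35, 211, 224, 290, 202], [98,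
     -120, 222, -300, 197, 30, -609, -28, -462], [2, -139, -195, -62]]),
    ([5, 4, 1, 0], [[66, 1064, 507, 154, 640, -4158, 91], [975, 2043, 2127, 1642, 857], [-5624,
     -384]]),
    ([5, 3, 2, 0], [[-1393, 244, 49, -1291, 1097, 1126, 446], [-153, 375, 2057, 1092, 856],
     [-2368, -2137]])]

def classesOfSpan6 : List (List ℕ × List (List ℤ)) := [
    ([6, 2, 1, 0], [[117, 102, -93, -200, -94, 202, -229, -577, -451, -163, -17, -116, -421],
     [-73, 773, 437, 418, -254, 18, 658], [-37]]),
    ([6, 3, 1, 0], [[-664, -96, 965, -787, 187, 654, 16, 341, 138, -516, 1237, 299, -472], [820,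
     351, 943, -701, 1556, 497, 1754], [-6522]]),
    ([6, 4, 1, 0], [[261, 105, -369, -257, -32, -224, 21, 48, 163, 199, 25, 225, -97], [402,
     -350, 206, 317, 19, -308, -684], [330]]),
    ([6, 5, 1, 0], [[-277, 16, 504, 288, -696, -395, -9], [902, -939, 268, -82], [420]]),
    ([6, 3, 2, 0], [[-63, 81, -290, 119, -177, 153, 178, 381, 156, -58, 391, 80, 325], [60, -141,
     -153, -207, 338, -159, -1067], [53]])]

def classesOfSpan7 : List (List ℕ × List (List ℤ)) := [
    ([7, 2, 1, 0], [[-1010, -942, -224, -579, 571, 2006, 1053, -120, 2521, 43, 418, 253], [-1559,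
     -1688, -1265, -1168, 1690]]),
    ([7, 3, 1, 0], [[38, 9, -323, -229, -335, -49, 887, 89, 56, -186, 75, 133], [357, 332, 163,
     193, -1210]]),
    ([7, 4, 1, 0], [[-139, 3, -573, -199, -438, 567, -453, -433, -584, -340, -518, -827], [471,
     1770, 155, 289, 1249]]),
    ([7, 5, 1, 0], [[19, -23, -480, -282, -601, -24, 375, 502, 216, 64, -316, -57], [93, 103, -6,
     -30, 447]]),
    ([7, 6, 1, 0], [[116, 561, -618, -430, -1216, -795], [1856, -142, 668]]),
    ([7, 3, 2, 0], [[-400, 1, -183, 336, -297, 224, -284, 272, 688, 85, 690, -156], [1065, 95,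
     99, -949, -1286]]),
    ([7, 4, 2, 0], [[31, 151, -318, -34, -338, -57, 321, -210, -210, -28, 97, -78], [-369, 215,
     -74, 428, 473]]),
    ([7, 5, 2, 0], [[-1833, -535, 672, -1289, 632, -515], [765, 630, 1473]]),
    ([7, 4, 3, 0], [[252, 229, -567, 256, -93, -561], [-414, 200, 698]])]

def classesOfSpan8 : List (List ℕ × List (List ℤ)) := [
    ([8, 2, 1, 0], [[-10, 22, 187, 116, -58, -152, 157, -172, -190, 333, -231], [149, -182, 31]]),
    ([8, 3, 1, 0], [[275, 367, 157, -458, 63, -422, 285, 44, -433, -729, -33], [-397, 640, 641]]),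
    ([8, 4, 1, 0], [[-224, 262, 35, 220, 94, 416, 45, -54, 50, 308, 331], [-772, -270, -441]]),
    ([8, 5, 1, 0], [[-924, 999, -174, -630, 84, -560, -683, -81, 346, 637, 1720], [-914, -1354,
     1534]]),
    ([8, 6, 1, 0], [[84, -133, 173, -9, 57, 33, 214, 780, -39, -37, -167], [-746, -155, -55]]),
    ([8, 7, 1, 0], [[-158, -120, 106, 37, -77, -256], [780, -312]]),
    ([8, 3, 2, 0], [[-370, 263, 8, -159, 13, -54, -469, -363, -22, -83, 156], [609, 374, 97]]),
    ([8, 5, 2, 0], [[67, -257, 493, 71, 214, 277, -61, 319, -102, -207, -78], [-339, -539, 142]]),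
    ([8, 4, 3, 0], [[-45, -253, -2, -141, 68, 298, 125, -67, -191, 134, -299], [628, -21, -234]]),
    ([8, 5, 3, 0], [[-339, 513, 221, -162, 998, 73], [-1157, -147]])]

def classesOfSpan9 : List (List ℕ × List (List ℤ)) := [
    ([9, 2, 1, 0], [[61, 370, 541, -29, 139, 453, 14, 233, -537, 196], [-1441]]),
    ([9, 3, 1, 0], [[-109, -187, -8, 129, 84, 52, -140, 210, -105, -427], [501]]),
    ([9, 4, 1, 0], [[-339, 765, -160, 687, -55, 278, -773, -174, 277, -305], [-201]]),
    ([9, 5, 1, 0], [[180, -180, -117, 62, 141, 140, 188, 146, -55, -6], [-499]]),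
    ([9, 6, 1, 0], [[478, -337, -494, 162, -868, -333, -611, -866, -873, -1759], [5501]]),
    ([9, 7, 1, 0], [[310, 67, 73, 40, 298, -214, -110, 208, -148, -229], [-295]]),
    ([9, 8, 1, 0], [[-583, 356, -151, -10, -409], [797]]),
    ([9, 3, 2, 0], [[-641, -897, 87, -867, 461, 455, -752, 79, 876, 449], [750]]),
    ([9, 4, 2, 0], [[307, -89, 217, 156, -83, 89, 95, 118, -87, -146], [-577]]),
    ([9, 5, 2, 0], [[-560, 99, -418, -658, -930, -876, -1377, -1006, 30, -312], [6008]]),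
    ([9, 6, 2, 0], [[-272, 22, -105, 252, 201, 7, 191, 203, -186, -631], [318]]),
    ([9, 7, 2, 0], [[763, 397, 1102, -2457, 30], [165]]),
    ([9, 4, 3, 0], [[516, 515, 36, -603, -294, 394, -951, -597, -306, 434], [856]]),
    ([9, 5, 3, 0], [[373, -27, 143, 174, -511, -215, -149, -192, -103, -12], [519]]),
    ([9, 5, 4, 0], [[192, -403, -115, 851, 574], [-1099]])]

def classesOfSpan10 : List (List ℕ × List (List ℤ)) := [
    ([10, 2, 1, 0], [[-81, 5, -166, 95, 33, -4, -214, 46, 286]]),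
    ([10, 3, 1, 0], [[-1600, -748, -1362, 305, 725, 278, -958, 1633, 1727]]),
    ([10, 4, 1, 0], [[-14, -394, 151, -228, -175, 148, 65, 388, 59]]),
    ([10, 5, 1, 0], [[-645, 5, -94, 348, 149, -352, -24, -129, 742]]),
    ([10, 6, 1, 0], [[-139, 63, -289, -231, -5, 119, 79, 364, 39]]),
    ([10, 7, 1, 0], [[779, -159, -2273, -701, 579, 300, 176, 236, 1063]]),
    ([10, 8, 1, 0], [[240, 36, 61, -187, 145, 273, -180, -48, -340]]),
    ([10, 9, 1, 0], [[644, -442, 81, -275, -8]]),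
    ([10, 3, 2, 0], [[-104, -191, 7, 324, -105, 110, -83, -140, 182]]),
    ([10, 5, 2, 0], [[23, -173, 121, -105, 344, 199, 171, -522, -58]]),
    ([10, 7, 2, 0], [[-169, 369, 156, 186, -199, -65, 165, 37, -480]]),
    ([10, 4, 3, 0], [[8, 70, -118, 211, -126, 65, 188, -373, 75]]),
    ([10, 5, 3, 0], [[-503, -173, -455, -4089, 831, 1525, 894, 1138, 832]]),
    ([10, 6, 3, 0], [[31, 124, -65, -219, -101, -127, 115, 235, 7]]),
    ([10, 7, 3, 0], [[-463, -94, 653, 15, -111]]),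
    ([10, 5, 4, 0], [[417, 72, -132, 158, -312, -67, -216, 129, -49]])]

def classesOfSpan11 : List (List ℕ × List (List ℤ)) := [
    ([11, 2, 1, 0], [[-673, 150, -766, 349, 129, 488, 22, 301]]),
    ([11, 3, 1, 0], [[-40, -99, 127, 97, 252, -22, -196, -119]]),
    ([11, 4, 1, 0], [[134, 258, 449, 86, -577, -86, -130, -134]]),
    ([11, 5, 1, 0], [[-153, 97, 340, 275, -202, -25, -178, -154]]),
    ([11, 6, 1, 0], [[383, -4, 417, -29, 17, -107, 570, -1247]]),
    ([11, 7, 1, 0], [[-155, -166, 109, 177, 214, 69, -145, -103]]),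
    ([11, 8, 1, 0], [[-1, 250, -227, -229, 427, -61, -178, 19]]),
    ([11, 9, 1, 0], [[-91, 181, -105, -102, -80, 7, -99, 289]]),
    ([11, 10, 1, 0], [[90, 251, -23, -318]]),
    ([11, 3, 2, 0], [[-381, 46, 455, 35, 94, -190, 157, -216]]),
    ([11, 4, 2, 0], [[90, -280, 67, -19, 331, -54, -48, -87]]),
    ([11, 5, 2, 0], [[-8, -103, -693, 1319, -956, -63, 122, 382]]),
    ([11, 6, 2, 0], [[119, 104, 90, -8, -55, -191, -7, -52]]),
    ([11, 7, 2, 0], [[-327, 17, -95, 670, -16, -358, 245, -136]]),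
    ([11, 8, 2, 0], [[206, 108, 68, -295, 34, -58, 66, -129]]),
    ([11, 9, 2, 0], [[631, 269, -485, -415]]),
    ([11, 4, 3, 0], [[516, 169, -1010, 322, -1225, 487, 577, 164]]),
    ([11, 5, 3, 0], [[-567, 100, 57, -195, 580, -184, 78, 131]]),
    ([11, 6, 3, 0], [[511, 620, -2, -389, -229, -134, -460, 83]]),
    ([11, 7, 3, 0], [[-44, 65, 55, 9, -143, 120, -236, 174]]),
    ([11, 8, 3, 0], [[-302, 26, 400, -124]]),
    ([11, 5, 4, 0], [[-712, 434, 369, -227, 394, -151, 41, -148]]),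
    ([11, 6, 4, 0], [[31, 8, 235, -51, 86, -100, -95, -114]]),
    ([11, 7, 4, 0], [[211, -810, 526, 73]]),
    ([11, 6, 5, 0], [[31, -35, 1042, -1038]])]

def classesOfSpan12 : List (List ℕ × List (List ℤ)) := [
    ([12, 2, 1, 0], [[126, -29, -397, 35, -21, 207, 79]]),
    ([12, 3, 1, 0], [[118, -21, -155, -101, -524, -126, 809]]),
    ([12, 4, 1, 0], [[179, -17, 12, -276, -33, -57, 192]]),
    ([12, 5, 1, 0], [[619, 34, 306, 201, -1229, 30, 39]]),
    ([12, 6, 1, 0], [[35, -20, -14, 140, 121, 21, -283]]),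
    ([12, 7, 1, 0], [[154, 248, 250, -277, 132, 31, -538]]),
    ([12, 8, 1, 0], [[-17, -97, -69, -83, 155, 0, 111]]),
    ([12, 9, 1, 0], [[149, -172, 1319, -1509, -30, -630, 873]]),
    ([12, 10, 1, 0], [[10, -146, 8, -62, -49, 198, 41]]),
    ([12, 11, 1, 0], [[243, -363, 26, 94]]),
    ([12, 3, 2, 0], [[102, 26, -6, -14, 97, 44, -249]]),
    ([12, 5, 2, 0], [[-239, 85, -15, 161, 137, -230, 101]]),
    ([12, 7, 2, 0], [[20, 120, -26, -195, 119, -39, 1]]),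
    ([12, 9, 2, 0], [[-50, 177, -80, 161, -192, -112, 96]]),
    ([12, 4, 3, 0], [[-468, -43, -161, 244, 150, 74, 204]]),
    ([12, 5, 3, 0], [[-15, 577, 90, 75, 83, -360, -450]]),
    ([12, 7, 3, 0], [[458, 190, 380, -1057, 177, 232, -380]]),
    ([12, 8, 3, 0], [[-88, 138, 21, -182, 23, 84, 4]]),
    ([12, 5, 4, 0], [[248, -39, -84, -6, 9, -315, 187]]),
    ([12, 7, 4, 0], [[-41, -94, -136, -264, 289, 238, 8]]),
    ([12, 6, 5, 0], [[-83, -85, -150, 372, 6, -124, 64]]),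
    ([12, 7, 5, 0], [[-418, -20, 116, 322]])]

def classesOfSpan13 : List (List ℕ × List (List ℤ)) := [
    ([13, 2, 1, 0], [[320, 368, 91, -61, -45, -673]]),
    ([13, 3, 1, 0], [[37, 33, 207, -251, 116, -142]]),
    ([13, 4, 1, 0], [[-805, -665, 363, 336, 710, 61]]),
    ([13, 5, 1, 0], [[74, 49, 48, 19, -172, -18]]),
    ([13, 6, 1, 0], [[286, -88, -213, 322, -194, -113]]),
    ([13, 7, 1, 0], [[137, -194, -86, -106, 22, 227]]),
    ([13, 8, 1, 0], [[94, 247, -678, 266, -874, 945]]),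
    ([13, 9, 1, 0], [[57, 44, 57, -76, 85, -167]]),
    ([13, 10, 1, 0], [[25, 160, 144, -395, -197, 263]]),
    ([13, 11, 1, 0], [[157, -103, 156, -47, -95, -68]]),
    ([13, 12, 1, 0], [[341, 432, -773]]),
    ([13, 3, 2, 0], [[205, 19, 45, -1181, -93, 1005]]),
    ([13, 4, 2, 0], [[78, 14, -80, 240, -88, -164]]),
    ([13, 5, 2, 0], [[-141, -26, 381, -150, 210, -274]]),
    ([13, 6, 2, 0], [[92, 40, -118, 206, -134, -86]]),
    ([13, 7, 2, 0], [[-286, -343, -177, 457, 409, -60]]),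
    ([13, 8, 2, 0], [[-256, -252, 86, 305, 22, 95]]),
    ([13, 9, 2, 0], [[163, -119, 33, -201, 119, 5]]),
    ([13, 10, 2, 0], [[247, 121, -156, 145, -242, -115]]),
    ([13, 11, 2, 0], [[-278, 277, 1]]),
    ([13, 4, 3, 0], [[149, 138, 523, -311, 61, -560]]),
    ([13, 5, 3, 0], [[169, -334, -23, -202, 243, 147]]),
    ([13, 6, 3, 0], [[494, 250, -1262, 999, -228, -253]]),
    ([13, 7, 3, 0], [[473, -180, -299, -116, -63, 185]]),
    ([13, 8, 3, 0], [[-48, -119, -15, 603, 32, -453]]),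
    ([13, 9, 3, 0], [[210, 86, 195, -90, -231, -170]]),
    ([13, 10, 3, 0], [[-617, 16, 601]]),
    ([13, 5, 4, 0], [[1232, 381, 517, 1233, 495, -3858]]),
    ([13, 6, 4, 0], [[1, -358, -77, -3, 156, 281]]),
    ([13, 7, 4, 0], [[-80, 57, -23, -99, 363, -218]]),
    ([13, 8, 4, 0], [[104, 24, -14, -60, -231, 177]]),
    ([13, 9, 4, 0], [[341, 294, -635]]),
    ([13, 6, 5, 0], [[451, 311, -117, -285, 263, -623]]),
    ([13, 7, 5, 0], [[58, 179, -96, -212, 138, -67]]),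
    ([13, 8, 5, 0], [[353, 628, -981]]),
    ([13, 7, 6, 0], [[-1280, 20, 1260]])]

def classesOfSpan14 : List (List ℕ × List (List ℤ)) := [
    ([14, 2, 1, 0], [[81, 200, -241, 93, -133]]),
    ([14, 3, 1, 0], [[123, -415, -320, 287, 325]]),
    ([14, 4, 1, 0], [[-188, 204, 3, 12, -31]]),
    ([14, 5, 1, 0], [[-429, -7, -310, -119, 865]]),
    ([14, 6, 1, 0], [[-47, -43, 54, -48, 84]]),
    ([14, 7, 1, 0], [[323, -376, -836, -88, 977]]),
    ([14, 8, 1, 0], [[-48, 117, -55, 97, -111]]),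
    ([14, 9, 1, 0], [[-19, 226, 43, 25, -275]]),
    ([14, 10, 1, 0], [[-10, -164, 71, 154, -51]]),
    ([14, 11, 1, 0], [[-646, -1525, -402, -843, 3416]]),
    ([14, 12, 1, 0], [[-70, -22, 63, 43, -14]]),
    ([14, 13, 1, 0], [[64, -101, 37]]),
    ([14, 3, 2, 0], [[-31, -27, 115, -50, -7]]),
    ([14, 5, 2, 0], [[232, -107, -129, -78, 82]]),
    ([14, 7, 2, 0], [[-159, -2, 97, 45, 19]]),
    ([14, 9, 2, 0], [[-64, 74, 135, 86, -231]]),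
    ([14, 11, 2, 0], [[-86, -213, -9, 163, 145]]),
    ([14, 4, 3, 0], [[76, -24, -67, 61, -46]]),
    ([14, 5, 3, 0], [[1102, -380, -198, 200, -724]]),
    ([14, 6, 3, 0], [[20, 89, -165, 114, -58]]),
    ([14, 7, 3, 0], [[-162, 80, -183, 95, 170]]),
    ([14, 8, 3, 0], [[-507, 141, -129, 5, 490]]),
    ([14, 9, 3, 0], [[641, -602, -614, 588, -13]]),
    ([14, 10, 3, 0], [[12, 181, -152, -18, -23]]),
    ([14, 11, 3, 0], [[-133, 124, 9]]),
    ([14, 5, 4, 0], [[173, -84, 29, -9, -109]]),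
    ([14, 7, 4, 0], [[-117, 135, 233, -233, -18]]),
    ([14, 9, 4, 0], [[32, -22, 18, 47, -75]]),
    ([14, 6, 5, 0], [[204, -30, -142, 17, -49]]),
    ([14, 7, 5, 0], [[462, -550, -59, -513, 660]]),
    ([14, 8, 5, 0], [[-255, -124, 113, 135, 131]]),
    ([14, 9, 5, 0], [[-61, 115, -54]]),
    ([14, 7, 6, 0], [[25, 97, -100, -189, 167]])]

def classesOfSpan15 : List (List ℕ × List (List ℤ)) := [
    ([15, 2, 1, 0], [[296, -12, 106, -390]]),
    ([15, 3, 1, 0], [[-23, 134, 54, -165]]),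
    ([15, 4, 1, 0], [[-234, 300, -28, -38]]),
    ([15, 5, 1, 0], [[-4, -61, -1, 66]]),
    ([15, 6, 1, 0], [[-137, -340, 166, 311]]),
    ([15, 7, 1, 0], [[116, -189, -80, 153]]),
    ([15, 8, 1, 0], [[228, 110, -428, 90]]),
    ([15, 9, 1, 0], [[-157, 100, -101, 158]]),
    ([15, 10, 1, 0], [[298, -163, 547, -682]]),
    ([15, 11, 1, 0], [[334, -79, -41, -214]]),
    ([15, 12, 1, 0], [[346, -393, 146, -99]]),
    ([15, 13, 1, 0], [[32, -161, 76, 53]]),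
    ([15, 14, 1, 0], [[-435, 435]]),
    ([15, 3, 2, 0], [[-359, 121, 324, -86]]),
    ([15, 4, 2, 0], [[121, -14, -46, -61]]),
    ([15, 5, 2, 0], [[-467, -438, -769, 1674]]),
    ([15, 6, 2, 0], [[-182, 41, -139, 280]]),
    ([15, 7, 2, 0], [[304, -161, 111, -254]]),
    ([15, 8, 2, 0], [[99, 13, 84, -196]]),
    ([15, 9, 2, 0], [[3059, -866, 29, -2222]]),
    ([15, 10, 2, 0], [[213, 11, 137, -361]]),
    ([15, 11, 2, 0], [[-53, -372, 95, 330]]),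
    ([15, 12, 2, 0], [[-133, 300, -67, -100]]),
    ([15, 13, 2, 0], [[-490, 490]]),
    ([15, 4, 3, 0], [[-1745, 147, 400, 1198]]),
    ([15, 5, 3, 0], [[23, 29, -72, 20]]),
    ([15, 7, 3, 0], [[76, -100, 160, -136]]),
    ([15, 8, 3, 0], [[-1386, 141, 450, 795]]),
    ([15, 10, 3, 0], [[263, -42, -403, 182]]),
    ([15, 11, 3, 0], [[-39, -18, -127, 184]]),
    ([15, 5, 4, 0], [[473, -211, -89, -173]]),
    ([15, 6, 4, 0], [[177, 248, -131, -294]]),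
    ([15, 7, 4, 0], [[-46, 49, 3, -6]]),
    ([15, 8, 4, 0], [[94, -28, 14, -80]]),
    ([15, 9, 4, 0], [[-384, -149, 118, 415]]),
    ([15, 10, 4, 0], [[132, -119, 2, -15]]),
    ([15, 11, 4, 0], [[-550, 550]]),
    ([15, 6, 5, 0], [[-411, -210, 426, 195]]),
    ([15, 7, 5, 0], [[-173, 43, -22, 152]]),
    ([15, 8, 5, 0], [[277, -501, 58, 166]]),
    ([15, 9, 5, 0], [[90, 242, -13, -319]]),
    ([15, 7, 6, 0], [[299, -225, -357, 283]]),
    ([15, 8, 6, 0], [[89, 61, -61, -89]]),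
    ([15, 8, 7, 0], [[135, -135]])]

def classesOfSpan16 : List (List ℕ × List (List ℤ)) := [
    ([16, 2, 1, 0], [[231, -49, -182]]),
    ([16, 3, 1, 0], [[-502, 254, 248]]),
    ([16, 4, 1, 0], [[-65, -114, 179]]),
    ([16, 5, 1, 0], [[-177, -397, 574]]),
    ([16, 6, 1, 0], [[-98, -74, 172]]),
    ([16, 7, 1, 0], [[-264, 126, 138]]),
    ([16, 8, 1, 0], [[19, 85, -104]]),
    ([16, 9, 1, 0], [[132, 41, -173]]),
    ([16, 10, 1, 0], [[-28, -74, 102]]),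
    ([16, 11, 1, 0], [[-72, -65, 137]]),
    ([16, 12, 1, 0], [[-308, 98, 210]]),
    ([16, 13, 1, 0], [[1859, 878, -2737]]),
    ([16, 14, 1, 0], [[91, -53, -38]]),
    ([16, 15, 1, 0], [[-115, 115]]),
    ([16, 3, 2, 0], [[-10, -11, 21]]),
    ([16, 5, 2, 0], [[-105, 24, 81]]),
    ([16, 7, 2, 0], [[23, 37, -60]]),
    ([16, 9, 2, 0], [[-36, 19, 17]]),
    ([16, 11, 2, 0], [[54, 68, -122]]),
    ([16, 13, 2, 0], [[-22, 100, -78]]),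
    ([16, 4, 3, 0], [[167, 30, -197]]),
    ([16, 5, 3, 0], [[375, -141, -234]]),
    ([16, 6, 3, 0], [[6, -34, 28]]),
    ([16, 7, 3, 0], [[-679, 32, 647]]),
    ([16, 8, 3, 0], [[-124, -95, 219]]),
    ([16, 9, 3, 0], [[413, -250, -163]]),
    ([16, 10, 3, 0], [[208, -52, -156]]),
    ([16, 11, 3, 0], [[-862, -171, 1033]]),
    ([16, 12, 3, 0], [[112, 28, -140]]),
    ([16, 13, 3, 0], [[-295, 295]]),
    ([16, 5, 4, 0], [[-30, -97, 127]]),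
    ([16, 7, 4, 0], [[-38, 9, 29]]),
    ([16, 9, 4, 0], [[22, 76, -98]]),
    ([16, 11, 4, 0], [[37, -60, 23]]),
    ([16, 6, 5, 0], [[-124, -13, 137]]),
    ([16, 7, 5, 0], [[-247, -120, 367]]),
    ([16, 8, 5, 0], [[0, 74, -74]]),
    ([16, 9, 5, 0], [[-674, 411, 263]]),
    ([16, 10, 5, 0], [[91, 67, -158]]),
    ([16, 11, 5, 0], [[-115, 115]]),
    ([16, 7, 6, 0], [[83, -82, -1]]),
    ([16, 9, 6, 0], [[76, 60, -136]]),
    ([16, 8, 7, 0], [[83, 46, -129]]),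
    ([16, 9, 7, 0], [[-14, 14]])]

def classesOfSpan17 : List (List ℕ × List (List ℤ)) := [
    ([17, 2, 1, 0], [[-40, 40]]),
    ([17, 3, 1, 0], [[70, -70]]),
    ([17, 4, 1, 0], [[-179, 179]]),
    ([17, 5, 1, 0], [[-2, 2]]),
    ([17, 6, 1, 0], [[-55, 55]]),
    ([17, 7, 1, 0], [[115, -115]]),
    ([17, 8, 1, 0], [[432, -432]]),
    ([17, 9, 1, 0], [[-75, 75]]),
    ([17, 10, 1, 0], [[104, -104]]),
    ([17, 11, 1, 0], [[31, -31]]),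
    ([17, 12, 1, 0], [[-140, 140]]),
    ([17, 13, 1, 0], [[16, -16]]),
    ([17, 14, 1, 0], [[-54, 54]]),
    ([17, 15, 1, 0], [[80, -80]]),
    ([17, 3, 2, 0], [[665, -665]]),
    ([17, 4, 2, 0], [[-29, 29]]),
    ([17, 5, 2, 0], [[-197, 197]]),
    ([17, 6, 2, 0], [[-198, 198]]),
    ([17, 7, 2, 0], [[170, -170]]),
    ([17, 8, 2, 0], [[106, -106]]),
    ([17, 9, 2, 0], [[184, -184]]),
    ([17, 10, 2, 0], [[110, -110]]),
    ([17, 11, 2, 0], [[-914, 914]]),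
    ([17, 12, 2, 0], [[-131, 131]]),
    ([17, 13, 2, 0], [[252, -252]]),
    ([17, 14, 2, 0], [[55, -55]]),
    ([17, 4, 3, 0], [[144, -144]]),
    ([17, 5, 3, 0], [[-87, 87]]),
    ([17, 6, 3, 0], [[-1004, 1004]]),
    ([17, 7, 3, 0], [[25, -25]]),
    ([17, 8, 3, 0], [[-94, 94]]),
    ([17, 9, 3, 0], [[7, -7]]),
    ([17, 10, 3, 0], [[71, -71]]),
    ([17, 11, 3, 0], [[-190, 190]]),
    ([17, 12, 3, 0], [[-89, 89]]),
    ([17, 13, 3, 0], [[-153, 153]]),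
    ([17, 5, 4, 0], [[-93, 93]]),
    ([17, 6, 4, 0], [[-5, 5]]),
    ([17, 7, 4, 0], [[109, -109]]),
    ([17, 8, 4, 0], [[-47, 47]]),
    ([17, 9, 4, 0], [[74, -74]]),
    ([17, 10, 4, 0], [[-12, 12]]),
    ([17, 11, 4, 0], [[-59, 59]]),
    ([17, 12, 4, 0], [[126, -126]]),
    ([17, 6, 5, 0], [[460, -460]]),
    ([17, 7, 5, 0], [[-18, 18]]),
    ([17, 8, 5, 0], [[-882, 882]]),
    ([17, 9, 5, 0], [[-31, 31]]),
    ([17, 10, 5, 0], [[330, -330]]),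
    ([17, 11, 5, 0], [[8, -8]]),
    ([17, 7, 6, 0], [[-1031, 1031]]),
    ([17, 8, 6, 0], [[42, -42]]),
    ([17, 9, 6, 0], [[32, -32]]),
    ([17, 10, 6, 0], [[15, -15]]),
    ([17, 8, 7, 0], [[303, -303]])]

def balancedClasses : List (List ℕ × List (List ℤ)) :=
  [classesOfSpan4, classesOfSpan5, classesOfSpan6, classesOfSpan7, classesOfSpan8,
   classesOfSpan9, classesOfSpan10, classesOfSpan11, classesOfSpan12, classesOfSpan13,
   classesOfSpan14, classesOfSpan15, classesOfSpan16, classesOfSpan17].flatten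

def classes : List (List ℕ × List (List ℤ)) :=
  ([3, 2, 1, 0], apRows) :: ([1, 0], pairRows) :: balancedClasses

def certificate : List (ℤ × List ℕ) :=
  classes.flatMap fun e => copies 18 e.1 e.2

theorem check_certificate : check 21 19 100000 certificate = true := by decide +kernel

theorem sum_apRows : apRows.flatten.sum = 120000 := by decide +kernel

theorem sum_pairRows : pairRows.flatten.sum = -15671 := by decide +kernel

theorem sum_balancedClasses :
    (balancedClasses.all fun e => decide (e.2.flatten.sum = 0)) = true := by decide +kernel

theorem length_rows_le : (classes.all fun e => Nat.ble e.2.length 18) = true := by decide +kernel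

theorem sorted_of_mem_certificate : ∀ t ∈ certificate, sorted 19 t.2 = true := by
  have h := check_certificate
  simp only [check, Bool.and_eq_true, List.all_eq_true] at h
  exact h.1.1

theorem weightedSum_certificate {p : ℕ} [Fact p.Prime] (hp : 18 < p) (f : ZMod p → ℤ) :
    weightedSum f certificate = 240000 * apSum f [3, 2, 1, 0] - 31342 * apSum f [1, 0] := by
  have hcl : ∀ e ∈ classes, weightedSum f (copies 18 e.1 e.2) =
      2 * e.2.flatten.sum * apSum f (e.1.map Nat.cast) := fun e he =>
    weightedSum_copies f
      (fun t ht => sorted_of_mem_certificate t (List.mem_flatMap.2 ⟨e, he, ht⟩))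
      ((Nat.le_of_ble_eq_true (List.all_eq_true.1 length_rows_le e he)).trans_lt hp)
  have hbal : (balancedClasses.map fun e => weightedSum f (copies 18 e.1 e.2)).sum = 0 := by
    refine List.sum_eq_zero fun x hx => ?_
    obtain ⟨e, he, rfl⟩ := List.mem_map.1 hx
    rw [hcl e (List.mem_cons_of_mem _ (List.mem_cons_of_mem _ he)),
      of_decide_eq_true (List.all_eq_true.1 sum_balancedClasses e he)]
    simp
  rw [certificate, weightedSum_flatMap, classes, List.map_cons, List.map_cons, List.sum_cons,
    List.sum_cons, hbal, hcl _ List.mem_cons_self,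
    hcl _ (List.mem_cons_of_mem _ List.mem_cons_self), sum_apRows, sum_pairRows]
  simp only [List.map_cons, List.map_nil, Nat.cast_ofNat, Nat.cast_one, Nat.cast_zero]
  ring

theorem lower_bound_apSum {p : ℕ} [Fact p.Prime] (hp : 18 < p) {f : ZMod p → ℤ}
    (hf : ∀ x, f x = 1 ∨ f x = -1) :
    -100000 * (p : ℤ) ^ 2 ≤ 240000 * apSum f [3, 2, 1, 0] - 31342 * apSum f [1, 0] := by
  rw [← weightedSum_certificate hp, ← sum_eval_eq_weightedSum]
  calc -100000 * (p : ℤ) ^ 2 = ∑ a : ZMod p, ∑ r : ZMod p, (-(100000 : ℕ) : ℤ) := by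
        simp [ZMod.card]; ring
    _ ≤ _ := Finset.sum_le_sum fun a _ => Finset.sum_le_sum fun r _ =>
        eval_ge_of_check check_certificate fun i => hf _

theorem apSum_pair {p : ℕ} [Fact p.Prime] (f : ZMod p → ℤ) {x y : ZMod p} (h : x ≠ y) :
    apSum f [x, y] = apSum f [1, 0] := by
  rw [← apSum_affine f [1, 0] y (sub_ne_zero.2 h)]
  simp

theorem apSum_pair_nonneg {p : ℕ} [Fact p.Prime] (f : ZMod p → ℤ) : 0 ≤ apSum f [1, 0] := by
  have : apSum f [1, 0] = (∑ a : ZMod p, f a) ^ 2 := by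
    rw [sq, Finset.sum_mul]
    refine Finset.sum_congr rfl fun a _ => ?_
    rw [← Equiv.sum_comp (Equiv.addLeft a) f, Finset.mul_sum]
    refine Finset.sum_congr rfl fun r _ => ?_
    simp [mul_comm]
  rw [this]
  exact sq_nonneg _

theorem monoAPCount_eq_card {p : ℕ} [NeZero p] (c : ZMod p → Fin 2) :
    monoAPCount p 4 c = (Finset.univ.filter fun q : ZMod p × ZMod p =>
      ∀ i < 4, c (q.1 + i • q.2) = c q.1).card := by
  rw [monoAPCount, Set.ncard_eq_toFinset_card', Set.toFinset_ofPred]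

theorem eight_mul_monoAPCount {p : ℕ} [Fact p.Prime] (hp : 18 < p) (c : ZMod p → Fin 2)
    {f : ZMod p → ℤ} (hf : ∀ x, f x = if c x = 0 then 1 else -1) :
    8 * (monoAPCount p 4 c : ℤ) = (p : ℤ) ^ 2 + 6 * apSum f [1, 0] + apSum f [3, 2, 1, 0] := by
  have hne : ∀ i j : ℕ, i < j → j < 4 → (j : ZMod p) ≠ i := fun i j hij hj h => by
    rw [ZMod.natCast_eq_natCast_iff', Nat.mod_eq_of_lt (by omega), Nat.mod_eq_of_lt (by omega)] at h
    omega
  have hpair : 6 * apSum f [1, 0] = apSum f [(1 : ℕ), (0 : ℕ)] + apSum f [(2 : ℕ), (0 : ℕ)] +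
      apSum f [(3 : ℕ), (0 : ℕ)] + apSum f [(2 : ℕ), (1 : ℕ)] + apSum f [(3 : ℕ), (1 : ℕ)] +
      apSum f [(3 : ℕ), (2 : ℕ)] := by
    rw [apSum_pair f (hne 0 1 (by simp) (by simp)), apSum_pair f (hne 0 2 (by simp) (by simp)),
      apSum_pair f (hne 0 3 (by simp) (by simp)), apSum_pair f (hne 1 2 (by simp) (by simp)),
      apSum_pair f (hne 1 3 (by simp) (by simp)), apSum_pair f (hne 2 3 (by simp) (by simp))]
    ring
  have hsq : (p : ℤ) ^ 2 = ∑ a : ZMod p, ∑ r : ZMod p, (1 : ℤ) := by simp [ZMod.card, sq]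
  rw [hpair, hsq, monoAPCount_eq_card, Finset.card_filter, Fintype.sum_prod_type]
  push_cast
  unfold apSum
  simp only [← Finset.sum_add_distrib, Finset.mul_sum]
  refine Finset.sum_congr rfl fun a _ => Finset.sum_congr rfl fun r _ => ?_
  have h4 : (∀ i < 4, c (a + i • r) = c a) ↔
      c (a + 1 * r) = c (a + 0 * r) ∧ c (a + 2 * r) = c (a + 0 * r) ∧
        c (a + 3 * r) = c (a + 0 * r) := by
    constructor
    · intro h
      have h1 := h 1 (by norm_num)
      have h2 := h 2 (by norm_num)
      have h3 := h 3 (by norm_num)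
      simp only [nsmul_eq_mul, Nat.cast_one, Nat.cast_ofNat] at h1 h2 h3
      simpa using ⟨by simpa using h1, h2, h3⟩
    · rintro ⟨h1, h2, h3⟩ i hi
      interval_cases i <;> simp_all [nsmul_eq_mul]
  simp only [h4, List.map_cons, List.map_nil, List.prod_cons, List.prod_nil, hf]
  generalize c (a + 0 * r) = x₀
  generalize c (a + 1 * r) = x₁
  generalize c (a + 2 * r) = x₂
  generalize c (a + 3 * r) = x₃
  revert x₀ x₁ x₂ x₃
  decide

theorem lower_bound_monoAPCount {p : ℕ} (hprime : p.Prime) (hp : 18 < p) (c : ZMod p → Fin 2) :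
    (7 / 96 : ℝ) * (p : ℝ) ^ 2 ≤ (monoAPCount p 4 c : ℝ) := by
  have := Fact.mk hprime
  set f : ZMod p → ℤ := fun x => if c x = 0 then 1 else -1 with hf
  have h₁ := lower_bound_apSum hp (f := f) fun x => by simp only [hf]; split_ifs <;> simp
  have h₂ := eight_mul_monoAPCount hp c (f := f) fun x => rfl
  have h₃ := apSum_pair_nonneg f
  have h : 7 * (p : ℤ) ^ 2 ≤ 96 * (monoAPCount p 4 c : ℤ) := by linarith
  have h' : 7 * (p : ℝ) ^ 2 ≤ 96 * (monoAPCount p 4 c : ℝ) := by exact_mod_cast h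
  linarith

end SignPoly

namespace BlockColoring

/-- The colour of the residue `n` modulo `20`. -/
def blockColor (n : ℤ) : Bool := Nat.testBit 74679 (n % 20).toNat

/-- The colour of an integer, constant on intervals of length `p / 20` and periodic modulo `p`. -/
def intColor (p : ℕ) (z : ℤ) : Bool := blockColor (20 * z / p)

theorem blockColor_add_mul (n k : ℤ) : blockColor (n + 20 * k) = blockColor n := by
  rw [blockColor, blockColor, Int.add_mul_emod_self_left]

theorem intColor_emod {p : ℕ} (hp : 0 < p) (z : ℤ) : intColor p (z % p) = intColor p z := by
  have h : 20 * z = 20 * (z % p) + 20 * (z / p) * p := by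
    linear_combination (-20 : ℤ) * (Int.emod_add_mul_ediv z p)
  rw [intColor, intColor, h, Int.add_mul_ediv_right _ _ (by omega), blockColor_add_mul]

def coloring (p : ℕ) (x : ZMod p) : Fin 2 := if intColor p x.val then 1 else 0

theorem coloring_intCast {p : ℕ} (hp : 0 < p) (z : ℤ) :
    coloring p (z : ZMod p) = if intColor p z then 1 else 0 := by
  have : NeZero p := ⟨hp.ne'⟩
  rw [coloring, ZMod.val_intCast, intColor_emod hp]

def Mono (p x y : ℕ) : Prop :=
  intColor p (2 * x - y) = intColor p x ∧ intColor p y = intColor p x ∧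
    intColor p (2 * y - x) = intColor p x

instance (p x y : ℕ) : Decidable (Mono p x y) := by unfold Mono; infer_instance

theorem monoAPCount_coloring_le {p : ℕ} (hp : 0 < p) :
    monoAPCount p 4 (coloring p) ≤
      ((Finset.range p ×ˢ Finset.range p).filter fun q => Mono p q.1 q.2).card := by
  have : NeZero p := ⟨hp.ne'⟩
  rw [monoAPCount, Set.ncard_eq_toFinset_card', Set.toFinset_ofPred]
  refine Finset.card_le_card_of_injOn (fun q => ((q.1 + q.2).val, (q.1 + 2 * q.2).val)) ?_ ?_
  · rintro ⟨a, d⟩ h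
    simp only [Finset.coe_filter, Finset.mem_univ, true_and, Set.mem_ofPred_eq] at h
    simp only [Finset.coe_filter, Finset.mem_product, Finset.mem_range, Set.mem_ofPred_eq]
    refine ⟨⟨ZMod.val_lt _, ZMod.val_lt _⟩, ?_⟩
    set x := (a + d).val with hx
    set y := (a + 2 * d).val with hy
    have hcol : ∀ z z' : ℤ, coloring p (z : ZMod p) = coloring p (z' : ZMod p) →
        intColor p z = intColor p z' := fun z z' h => by
      rw [coloring_intCast hp, coloring_intCast hp] at h
      revert h
      cases intColor p z <;> cases intColor p z' <;> simp
    have h₁ : ((x : ℤ) : ZMod p) = a + 1 • d := by simp [hx]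
    have h₂ : ((y : ℤ) : ZMod p) = a + 2 • d := by simp [hy]
    have h₀ : ((2 * x - y : ℤ) : ZMod p) = a := by
      push_cast at h₁ h₂ ⊢; rw [h₁, h₂]; simp; ring
    have h₃ : ((2 * y - x : ℤ) : ZMod p) = a + 3 • d := by
      push_cast at h₁ h₂ ⊢; rw [h₁, h₂]; simp; ring
    refine ⟨hcol _ _ ?_, hcol _ _ ?_, hcol _ _ ?_⟩
    · rw [h₀, h₁, h 1 (by norm_num)]
    · rw [h₁, h₂, h 1 (by norm_num), h 2 (by norm_num)]
    · rw [h₁, h₃, h 1 (by norm_num), h 3 (by norm_num)]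
  · rintro ⟨a, d⟩ _ ⟨a', d'⟩ _ h
    simp only [Prod.mk.injEq] at h
    have h₁ := ZMod.val_injective p h.1
    have h₂ := ZMod.val_injective p h.2
    have hd : d = d' := by linear_combination h₂ - h₁
    subst hd
    simpa using h₁

/-- Rounding errors of the outer terms `2 * x - y` and `2 * y - x` of a progression. -/
def shift : Fin 7 → ℤ × ℤ := ![(0, 0), (-1, 0), (0, 1), (1, 0), (0, -1), (-1, 1), (1, -1)]

def Good (i j : ℤ) (k : Fin 7) : Prop :=
  blockColor (2 * i - j + (shift k).1) = blockColor i ∧ blockColor j = blockColor i ∧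
    blockColor (2 * j - i + (shift k).2) = blockColor i

instance (i j : ℤ) (k : Fin 7) : Decidable (Good i j k) := by unfold Good; infer_instance

def goodCount (i : ℕ) (k : Fin 7) : ℕ := ((Finset.range 20).filter fun j : ℕ => Good i j k).card

def hinge (c u : ℝ) : ℝ := max (c - u) 0

/-- Length of the slice of the `k`-th rounding region over the abscissa `u`. -/
noncomputable def slice (p u : ℝ) : Fin 7 → ℝ :=
  ![3 / 2 * hinge p u - 3 / 2 * hinge (2 * p / 3) u - 3 / 2 * hinge (p / 3) u,
    3 / 2 * hinge (p / 3) u,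
    1 / 2 * hinge p u - 2 * hinge (p / 2) u + 3 / 2 * hinge (p / 3) u,
    1 / 2 * p - 3 / 2 * hinge p u + 3 / 2 * hinge (2 * p / 3) u,
    3 / 2 * hinge (2 * p / 3) u - 2 * hinge (p / 2) u,
    2 * hinge (p / 2) u - 3 / 2 * hinge (p / 3) u,
    1 / 2 * p - 1 / 2 * hinge p u - 3 / 2 * hinge (2 * p / 3) u + 2 * hinge (p / 2) u]

/-- Area of the `k`-th rounding region in the unit square. -/
noncomputable def area : Fin 7 → ℝ := ![1 / 3, 1 / 12, 1 / 12, 1 / 12, 1 / 12, 1 / 6, 1 / 6]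

theorem sum_goodCount_mul_area :
    ∑ i ∈ Finset.range 20, ∑ k, (goodCount i k : ℝ) * area k = 136 / 3 := by
  have h : ∀ k, ∑ i ∈ Finset.range 20, goodCount i k = ![36, 50, 50, 50, 50, 50, 50] k := by decide +kernel
  rw [Finset.sum_comm]
  simp only [← Finset.sum_mul, ← Nat.cast_sum, h]
  simp [Fin.sum_univ_succ, area]
  norm_num

/-- Coordinates `v` of the points with abscissa `u` in the `k`-th rounding region. -/
def InSlice (p u v : ℝ) (k : Fin 7) : Prop :=
  0 ≤ v ∧ v ≤ p ∧ (shift k).1 * p ≤ 2 * u - v ∧ 2 * u - v ≤ ((shift k).1 + 1) * p ∧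
    (shift k).2 * p ≤ 2 * v - u ∧ 2 * v - u ≤ ((shift k).2 + 1) * p

theorem hinge_cases (c u : ℝ) : u ≤ c ∧ hinge c u = c - u ∨ c ≤ u ∧ hinge c u = 0 := by
  rcases le_total u c with h | h
  · exact Or.inl ⟨h, max_eq_left (by linarith)⟩
  · exact Or.inr ⟨h, max_eq_right (by linarith)⟩

theorem slice_nonneg {p u : ℝ} (hu : 0 ≤ u) (hup : u ≤ p) (k : Fin 7) : 0 ≤ slice p u k := by
  have h1 : hinge p u = p - u := max_eq_left (by linarith)
  rcases hinge_cases (p / 3) u with ⟨h, e⟩ | ⟨h, e⟩ <;>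
    rcases hinge_cases (p / 2) u with ⟨h', e'⟩ | ⟨h', e'⟩ <;>
    rcases hinge_cases (2 * p / 3) u with ⟨h'', e''⟩ | ⟨h'', e''⟩ <;>
    simp only [slice, h1, e, e', e''] <;> fin_cases k <;> simp <;> linarith

set_option maxHeartbeats 2000000 in
theorem sub_le_slice {p u v v' : ℝ} (hup : u ≤ p) (k : Fin 7)
    (hv : InSlice p u v k) (hv' : InSlice p u v' k) : v - v' ≤ slice p u k := by
  have h1 : hinge p u = p - u := max_eq_left (by linarith)
  obtain ⟨a₁, a₂, a₃, a₄, a₅, a₆⟩ := hv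
  obtain ⟨b₁, b₂, b₃, b₄, b₅, b₆⟩ := hv'
  fin_cases k <;> simp [shift] at a₃ a₄ a₅ a₆ b₃ b₄ b₅ b₆ <;> simp [slice, h1] <;>
    rcases hinge_cases (p / 3) u with ⟨h, e⟩ | ⟨h, e⟩ <;>
    rcases hinge_cases (p / 2) u with ⟨h', e'⟩ | ⟨h', e'⟩ <;>
    rcases hinge_cases (2 * p / 3) u with ⟨h'', e''⟩ | ⟨h'', e''⟩ <;>
    rw [← sub_nonneg] <;> simp only [e, e', e''] <;> linarith

theorem exists_shift {p u v : ℤ} (hp : 0 < p) (hu : 0 ≤ u) (hup : u < p) (hv : 0 ≤ v)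
    (hvp : v < p) : ∃ k, shift k = ((2 * u - v) / p, (2 * v - u) / p) := by
  have bounds : ∀ w : ℤ, -p < w → w < 2 * p →
      w / p = -1 ∧ w < 0 ∨ w / p = 0 ∨ w / p = 1 ∧ p ≤ w := by
    intro w h₁ h₂
    have e := Int.emod_add_mul_ediv w p
    have := Int.emod_nonneg w hp.ne'
    have := Int.emod_lt_of_pos w hp
    have : w / p < 2 := by rw [Int.ediv_lt_iff_lt_mul hp]; exact h₂
    have : -1 ≤ w / p := by rw [Int.le_ediv_iff_mul_le hp]; linarith
    generalize w / p = q at *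
    obtain rfl | rfl | rfl : q = -1 ∨ q = 0 ∨ q = 1 := by omega
    · left; constructor <;> linarith
    · simp
    · right; right; constructor <;> linarith
  rcases bounds (2 * u - v) (by linarith) (by linarith) with ⟨h, h'⟩ | h | ⟨h, h'⟩ <;>
    rcases bounds (2 * v - u) (by linarith) (by linarith) with ⟨g, g'⟩ | g | ⟨g, g'⟩ <;>
    rw [h, g] <;> first | (exfalso; linarith) | decide

/-- Ordinates `y` in the block `j` for which `(x, y)` has the `k`-th rounding type. -/
def sliceSet (p x j : ℕ) (k : Fin 7) : Finset ℕ :=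
  (Finset.range p).filter fun y => 20 * y / p = j ∧
    shift k = ((2 * (20 * x - (20 * x / p : ℕ) * p) - (20 * y - (j : ℤ) * p)) / p,
      (2 * (20 * y - (j : ℤ) * p) - (20 * x - (20 * x / p : ℕ) * p)) / p)

theorem card_le_of_sub_le {S : Finset ℕ} {D : ℝ} (hD : 0 ≤ D)
    (h : ∀ y ∈ S, ∀ y' ∈ S, (y : ℝ) - y' ≤ D) : (S.card : ℝ) ≤ D + 1 := by
  rcases S.eq_empty_or_nonempty with rfl | hS
  · simp; linarith
  · have hcard : S.card ≤ S.max' hS + 1 - S.min' hS := by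
      rw [← Nat.card_Icc]
      exact Finset.card_le_card fun y hy =>
        Finset.mem_Icc.2 ⟨S.min'_le y hy, S.le_max' y hy⟩
    have hle := S.min'_le _ (S.max'_mem hS)
    have := h _ (S.max'_mem hS) _ (S.min'_mem hS)
    have : (S.card : ℝ) + S.min' hS ≤ S.max' hS + 1 := by exact_mod_cast by omega
    linarith

theorem sub_mul_div_bounds {p : ℕ} (hp : 0 < p) (n : ℕ) :
    0 ≤ (n : ℤ) - (n / p : ℕ) * p ∧ (n : ℤ) - (n / p : ℕ) * p < p := by
  have h : ((n % p : ℕ) : ℤ) = n - (n / p : ℕ) * p := by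
    have := Nat.mod_add_div n p
    zify at this ⊢
    linear_combination this
  rw [← h]
  exact ⟨by positivity, by exact_mod_cast Nat.mod_lt n hp⟩

theorem card_sliceSet_le {p : ℕ} (hp : 0 < p) (x j : ℕ) (k : Fin 7) :
    ((sliceSet p x j k).card : ℝ) ≤ slice p (20 * x - (20 * x / p : ℕ) * p) k / 20 + 1 := by
  have hpz : (0 : ℤ) < p := by exact_mod_cast hp
  obtain ⟨hu, hup⟩ := sub_mul_div_bounds hp (20 * x)
  have hu' : (0 : ℝ) ≤ 20 * x - (20 * x / p : ℕ) * p := by exact_mod_cast hu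
  have hup' : (20 * x - (20 * x / p : ℕ) * p : ℝ) ≤ p := by exact_mod_cast hup.le
  have key : ∀ y ∈ sliceSet p x j k,
      InSlice p (20 * x - (20 * x / p : ℕ) * p) (20 * y - j * p) k := by
    intro y hy
    obtain ⟨-, hj, hk⟩ := Finset.mem_filter.1 hy
    obtain ⟨hv, hvp⟩ := sub_mul_div_bounds hp (20 * y)
    rw [hj] at hv hvp
    have e : ∀ w : ℤ, w / p * p ≤ w ∧ w ≤ (w / p + 1) * p := fun w =>
      ⟨Int.ediv_mul_le w hpz.ne', (Int.lt_ediv_add_one_mul_self w hpz).le⟩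
    obtain ⟨e₁, e₂⟩ := e (2 * (20 * x - (20 * x / p : ℕ) * p) - (20 * y - (j : ℤ) * p))
    obtain ⟨e₃, e₄⟩ := e (2 * (20 * y - (j : ℤ) * p) - (20 * x - (20 * x / p : ℕ) * p))
    simp only [InSlice, hk]
    refine ⟨?_, ?_, ?_, ?_, ?_, ?_⟩
    · exact_mod_cast hv
    · exact_mod_cast hvp.le
    · exact_mod_cast e₁
    · exact_mod_cast e₂
    · exact_mod_cast e₃
    · exact_mod_cast e₄
  refine card_le_of_sub_le (div_nonneg (slice_nonneg hu' hup' k) (by norm_num)) ?_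
  intro y hy y' hy'
  have := sub_le_slice hup' k (key y hy) (key y' hy')
  linarith

theorem Mono.exists_good {p x y : ℕ} (hp : 0 < p) (h : Mono p x y) (hy : y < p) :
    ∃ k, Good (20 * x / p : ℕ) (20 * y / p : ℕ) k ∧ y ∈ sliceSet p x (20 * y / p) k := by
  have hpz : (0 : ℤ) < p := by exact_mod_cast hp
  obtain ⟨hu, hup⟩ := sub_mul_div_bounds hp (20 * x)
  obtain ⟨hv, hvp⟩ := sub_mul_div_bounds hp (20 * y)
  obtain ⟨k, hk⟩ := exists_shift hpz hu hup hv hvp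
  have hk' := hk
  push_cast at hk'
  refine ⟨k, ?_, Finset.mem_filter.2 ⟨Finset.mem_range.2 hy, rfl, by push_cast; exact hk'⟩⟩
  have outer : ∀ a b i j : ℤ, 20 * (2 * a - b) / p =
      2 * i - j + (2 * (20 * a - i * p) - (20 * b - j * p)) / p := by
    intro a b i j
    rw [show 20 * (2 * a - b) = 2 * (20 * a - i * p) - (20 * b - j * p) + (2 * i - j) * p by ring,
      Int.add_mul_ediv_right _ _ hpz.ne', add_comm]
  obtain ⟨h₀, h₂, h₃⟩ := h
  simp only [intColor] at h₀ h₂ h₃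
  rw [outer x y (20 * x / p) (20 * y / p)] at h₀
  rw [outer y x (20 * y / p) (20 * x / p)] at h₃
  simp only [Good, hk']
  push_cast
  exact ⟨h₀, h₂, h₃⟩

theorem card_mono_le {p : ℕ} (hp : 0 < p) (x : ℕ) :
    (((Finset.range p).filter fun y => Mono p x y).card : ℝ) ≤
      ∑ k, goodCount (20 * x / p) k * (slice p (20 * x - (20 * x / p : ℕ) * p) k / 20 + 1) := by
  have hsub : ((Finset.range p).filter fun y => Mono p x y) ⊆
      Finset.univ.biUnion fun k : Fin 7 =>
        ((Finset.range 20).filter fun j : ℕ => Good (20 * x / p : ℕ) j k).biUnion fun j =>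
          sliceSet p x j k := by
    intro y hy
    obtain ⟨hy, h⟩ := Finset.mem_filter.1 hy
    rw [Finset.mem_range] at hy
    obtain ⟨k, hk, hyk⟩ := h.exists_good hp hy
    simp only [Finset.mem_biUnion, Finset.mem_univ, true_and, Finset.mem_filter, Finset.mem_range]
    exact ⟨k, _, ⟨by rw [Nat.div_lt_iff_lt_mul hp]; omega, hk⟩, hyk⟩
  have hcard := (Finset.card_le_card hsub).trans <| Finset.card_biUnion_le.trans <|
    Finset.sum_le_sum fun k _ => Finset.card_biUnion_le
  refine (Nat.cast_le.2 hcard).trans ?_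
  push_cast
  refine Finset.sum_le_sum fun k _ => ?_
  rw [goodCount, ← nsmul_eq_mul]
  exact Finset.sum_le_card_nsmul _ _ _ fun j _ => card_sliceSet_le hp x j k

theorem abs_hinge_step_le (c u : ℝ) :
    |20 * hinge c u - (hinge c u ^ 2 - hinge c (u + 20) ^ 2) / 2| ≤ 200 := by
  rcases hinge_cases c u with ⟨h, e⟩ | ⟨h, e⟩ <;>
    rcases hinge_cases c (u + 20) with ⟨h', e'⟩ | ⟨h', e'⟩ <;>
    rw [e, e', abs_le] <;> constructor <;> nlinarith

/-- Left Riemann sums of the hinge function with step `20`. -/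
theorem abs_sum_hinge_sub_le (c e : ℝ) (a : ℕ) {b : ℕ} (hab : a ≤ b) :
    |20 * ∑ x ∈ Finset.Ico a b, hinge c (20 * x - e) -
      (hinge c (20 * a - e) ^ 2 - hinge c (20 * b - e) ^ 2) / 2| ≤ 200 * ((b : ℝ) - a) := by
  induction b, hab using Nat.le_induction with
  | base => simp
  | succ b hab ih =>
    rw [Finset.sum_Ico_succ_top hab]
    have h := abs_hinge_step_le c (20 * b - e)
    rw [show (20 * b - e + 20 : ℝ) = 20 * (b + 1 : ℕ) - e by push_cast; ring] at h
    push_cast at h ih ⊢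
    rw [abs_le] at *
    constructor <;> linarith [h.1, h.2, ih.1, ih.2]

/-- The first natural number `x` with `20 * x / p ≥ i`. -/
def blockStart (p i : ℕ) : ℕ := (i * p + 19) / 20

theorem blockStart_bounds (p i : ℕ) :
    (0 : ℝ) ≤ 20 * blockStart p i - i * p ∧ 20 * blockStart p i - i * p ≤ (20 : ℝ) := by
  have h₁ : i * p ≤ 20 * blockStart p i := by unfold blockStart; omega
  have h₂ : 20 * blockStart p i ≤ i * p + 20 := by unfold blockStart; omega
  constructor
  · have : (i * p : ℝ) ≤ 20 * blockStart p i := by exact_mod_cast h₁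
    linarith
  · have : (20 * blockStart p i : ℝ) ≤ i * p + 20 := by exact_mod_cast h₂
    linarith

theorem blockStart_le_succ (p i : ℕ) : blockStart p i ≤ blockStart p (i + 1) := by
  unfold blockStart
  gcongr
  omega

theorem filter_block {p i : ℕ} (hp : 0 < p) (hi : i < 20) :
    ((Finset.range p).filter fun x => 20 * x / p = i) =
      Finset.Ico (blockStart p i) (blockStart p (i + 1)) := by
  ext x
  have h₁ : (i + 1) * p ≤ 20 * p := Nat.mul_le_mul_right p hi
  have h₂ : (i + 1) * p = i * p + p := by ring
  have h₃ : 20 * x / p = i ↔ i * p ≤ 20 * x ∧ 20 * x < (i + 1) * p := by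
    rw [← Nat.le_div_iff_mul_le hp, ← Nat.div_lt_iff_lt_mul hp]
    omega
  simp only [Finset.mem_filter, Finset.mem_range, Finset.mem_Ico, blockStart, h₃]
  clear h₃
  generalize (i + 1) * p = r at *
  generalize i * p = s at *
  omega

theorem abs_block_card_sub_le (p i : ℕ) :
    |20 * ∑ _x ∈ Finset.Ico (blockStart p i) (blockStart p (i + 1)), (1 : ℝ) - p| ≤ 20 := by
  have h₁ := blockStart_bounds p i
  have h₂ := blockStart_bounds p (i + 1)
  rw [Finset.sum_const, Nat.card_Ico, nsmul_one, Nat.cast_sub (blockStart_le_succ p i), abs_le]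
  push_cast at h₂
  constructor <;> linarith [h₁.1, h₁.2, h₂.1, h₂.2]

theorem abs_block_hinge_sub_le {p : ℕ} (hp : 0 < p) (i : ℕ) {c : ℝ} (hc : 0 ≤ c) (hcp : c ≤ p) :
    |20 * ∑ x ∈ Finset.Ico (blockStart p i) (blockStart p (i + 1)), hinge c (20 * x - i * p) -
      c ^ 2 / 2| ≤ 230 * (p : ℝ) := by
  have hp1 : (1 : ℝ) ≤ p := by exact_mod_cast hp
  have h₁ := blockStart_bounds p i
  have h₂ := blockStart_bounds p (i + 1)
  have h := abs_sum_hinge_sub_le c (i * p) _ (blockStart_le_succ p i)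
  generalize blockStart p i = a at *
  generalize blockStart p (i + 1) = b at *
  push_cast at h₂
  have hb : hinge c (20 * b - i * p) = 0 := max_eq_right (by linarith [h₂.1])
  have ha : |hinge c (20 * a - i * p) ^ 2 - c ^ 2| ≤ 40 * p := by
    generalize (20 * a - i * p : ℝ) = u at *
    rcases hinge_cases c u with ⟨h, e⟩ | ⟨h, e⟩ <;> rw [e, abs_le] <;> constructor <;>
      nlinarith [h₁.1, h₁.2]
  rw [hb] at h
  rw [abs_le] at *
  constructor <;> linarith [h.1, h.2, ha.1, ha.2, h₁.1, h₁.2, h₂.1, h₂.2]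

theorem block_slice_le {p : ℕ} (hp : 0 < p) (i : ℕ) (k : Fin 7) :
    ∑ x ∈ Finset.Ico (blockStart p i) (blockStart p (i + 1)),
      (slice p (20 * x - i * p) k / 20 + 1) ≤ area k * p ^ 2 / 400 + 4 * p := by
  have hp1 : (1 : ℝ) ≤ p := by exact_mod_cast hp
  have hcard := abs_le.1 (abs_block_card_sub_le p i)
  have h := fun c hc hcp => abs_le.1 (abs_block_hinge_sub_le hp i (c := c) hc hcp)
  have h₁ := h p (by linarith) (by linarith)
  have h₂ := h (2 * p / 3) (by linarith) (by linarith)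
  have h₃ := h (p / 2) (by linarith) (by linarith)
  have h₄ := h (p / 3) (by linarith) (by linarith)
  have hcardp := mul_le_mul_of_nonneg_left hcard.2 (Nat.cast_nonneg (α := ℝ) p)
  have hc : ∀ r : ℝ, ∑ _x ∈ Finset.Ico (blockStart p i) (blockStart p (i + 1)), r =
      r * ∑ _x ∈ Finset.Ico (blockStart p i) (blockStart p (i + 1)), 1 := fun r => by
    rw [Finset.mul_sum, mul_one]
  rw [Finset.sum_add_distrib, ← Finset.sum_div]
  fin_cases k <;>
    simp [slice, area, Finset.sum_add_distrib, Finset.sum_sub_distrib, ← Finset.mul_sum,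
      -Finset.sum_const] <;>
    (try rw [hc (p : ℝ)]) <;>
    ring_nf at hcard hcardp h₁ h₂ h₃ h₄ ⊢ <;>
    linarith [hcard.1, hcard.2, hcardp, h₁.1, h₁.2, h₂.1, h₂.2, h₃.1, h₃.2, h₄.1, h₄.2]

theorem monoAPCount_coloring_le_real {p : ℕ} (hp : 0 < p) :
    (monoAPCount p 4 (coloring p) : ℝ) ≤ 17 / 150 * p ^ 2 + 11200 * p := by
  have hfirst : ((((Finset.range p ×ˢ Finset.range p).filter fun q => Mono p q.1 q.2).card : ℕ) :
      ℝ) = ∑ x ∈ Finset.range p, (((Finset.range p).filter fun y => Mono p x y).card : ℝ) := by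
    rw [Finset.card_filter, Finset.sum_product]
    push_cast [Finset.card_filter]
    rfl
  have hmaps : ∀ x ∈ Finset.range p, 20 * x / p ∈ Finset.range 20 := fun x hx => by
    rw [Finset.mem_range] at *
    rw [Nat.div_lt_iff_lt_mul hp]
    omega
  have hcount : ∀ i k, (goodCount i k : ℝ) ≤ 20 := fun i k => by
    have := Finset.card_filter_le (Finset.range 20) fun j : ℕ => Good i j k
    rw [Finset.card_range] at this
    exact_mod_cast this
  have hblock : ∀ i ∈ Finset.range 20, ∑ x ∈ (Finset.range p).filter (fun x => 20 * x / p = i),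
      ∑ k, (goodCount (20 * x / p) k : ℝ) * (slice p (20 * x - (20 * x / p : ℕ) * p) k / 20 + 1) ≤
      ∑ k, ((goodCount i k : ℝ) * area k * (p ^ 2 / 400) + 80 * p) := by
    intro i hi
    rw [Finset.sum_comm]
    refine Finset.sum_le_sum fun k _ => ?_
    have hrw : ∀ x ∈ (Finset.range p).filter (fun x => 20 * x / p = i),
        (goodCount (20 * x / p) k : ℝ) * (slice p (20 * x - (20 * x / p : ℕ) * p) k / 20 + 1) =
        goodCount i k * (slice p (20 * x - i * p) k / 20 + 1) := fun x hx => by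
      rw [(Finset.mem_filter.1 hx).2]
    rw [Finset.sum_congr rfl hrw, ← Finset.mul_sum, filter_block hp (Finset.mem_range.1 hi)]
    refine (mul_le_mul_of_nonneg_left (block_slice_le hp i k) (Nat.cast_nonneg _)).trans ?_
    have := mul_le_mul_of_nonneg_right (hcount i k) (Nat.cast_nonneg (α := ℝ) p)
    linarith
  calc (monoAPCount p 4 (coloring p) : ℝ)
      ≤ ∑ x ∈ Finset.range p, (((Finset.range p).filter fun y => Mono p x y).card : ℝ) := by
        rw [← hfirst]
        exact_mod_cast monoAPCount_coloring_le hp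
    _ ≤ ∑ x ∈ Finset.range p, ∑ k, (goodCount (20 * x / p) k : ℝ) *
          (slice p (20 * x - (20 * x / p : ℕ) * p) k / 20 + 1) :=
        Finset.sum_le_sum fun x _ => card_mono_le hp x
    _ ≤ ∑ i ∈ Finset.range 20, ∑ k, ((goodCount i k : ℝ) * area k * (p ^ 2 / 400) + 80 * p) := by
        rw [← Finset.sum_fiberwise_of_maps_to hmaps]
        exact Finset.sum_le_sum hblock
    _ = 17 / 150 * p ^ 2 + 11200 * p := by
        simp only [Finset.sum_add_distrib, ← Finset.sum_mul, sum_goodCount_mul_area]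
        simp
        ring

end BlockColoring

theorem wolf_improvement :
    ∀ ε : ℝ, 0 < ε → ∃ N : ℕ, ∀ p : ℕ, N ≤ p → p.Prime →
      (∀ c : ZMod p → Fin 2, (7 / 96 : ℝ) * (p : ℝ) ^ 2 ≤ (monoAPCount p 4 c : ℝ)) ∧
      (∃ c : ZMod p → Fin 2, (monoAPCount p 4 c : ℝ) ≤ (17 / 150 + ε) * (p : ℝ) ^ 2) := by
  intro ε hε
  refine ⟨max 19 ⌈11200 / ε⌉₊, fun p hN hp => ⟨fun c => ?_, BlockColoring.coloring p, ?_⟩⟩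
  · exact SignPoly.lower_bound_monoAPCount hp (by omega) c
  · refine (BlockColoring.monoAPCount_coloring_le_real hp.pos).trans ?_
    have h : 11200 / ε ≤ p := (Nat.le_ceil _).trans (by exact_mod_cast (le_max_right _ _).trans hN)
    rw [div_le_iff₀ hε] at h
    have := mul_le_mul_of_nonneg_right h (Nat.cast_nonneg (α := ℝ) p)
    linarith
end

section
/- For every ε > 0 there exists N such that for every odd integer n ≥ N there exists a 2-coloring c of Z_n with M_4(n,c) ≤ (17/150 + ε)·n². -/
open Finset

/-- The `20`-periodic coloring of `ℕ` with period `11101101110001001000`. -/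
def blockColor (i : ℕ) : Fin 2 := if Nat.testBit 74679 (i % 20) then 1 else 0

lemma blockColor_add_mul (i w : ℕ) : blockColor (20 * w + i) = blockColor i := by
  simp [blockColor]

/-- The pairs of blocks `(i, j)` for which the `4`-AP with carries `e₁, e₂, e₃` is
monochromatic. -/
def blockPairs (e₁ e₂ e₃ : ℕ) : Finset (ℕ × ℕ) :=
  (range 20 ×ˢ range 20).filter fun x =>
    blockColor (x.1 + x.2 + e₁) = blockColor x.1 ∧
    blockColor (x.1 + 2 * x.2 + e₂) = blockColor x.1 ∧
    blockColor (x.1 + 3 * x.2 + e₃) = blockColor x.1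

lemma card_blockPairs_le {q p s : ℕ} (hp : p < q) (hs : s < q) :
    #(blockPairs ((p + s) / q) ((p + 2 * s) / q) ((p + 3 * s) / q)) ≤
      if p + 3 * s < q ∨ 3 * q ≤ p + 3 * s then 36 else 50 := by
  have hq : 0 < q := by omega
  have key : ∀ x k, k * q ≤ x → x < k * q + q → x / q = k := fun x k h₁ h₂ =>
    Nat.div_eq_of_lt_le h₁ (by rw [Nat.add_mul]; omega)
  have h000 : #(blockPairs 0 0 0) ≤ 36 := by decide +kernel
  have h123 : #(blockPairs 1 2 3) ≤ 36 := by decide +kernel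
  have h001 : #(blockPairs 0 0 1) ≤ 50 := by decide +kernel
  have h011 : #(blockPairs 0 1 1) ≤ 50 := by decide +kernel
  have h111 : #(blockPairs 1 1 1) ≤ 50 := by decide +kernel
  have h012 : #(blockPairs 0 1 2) ≤ 50 := by decide +kernel
  have h112 : #(blockPairs 1 1 2) ≤ 50 := by decide +kernel
  have h122 : #(blockPairs 1 2 2) ≤ 50 := by decide +kernel
  split_ifs with h
  · rcases h with h | h
    · rw [key (p + s) 0 (by omega) (by omega), key (p + 2 * s) 0 (by omega) (by omega),
        key (p + 3 * s) 0 (by omega) (by omega)]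
      exact h000
    · rw [key (p + s) 1 (by omega) (by omega), key (p + 2 * s) 2 (by omega) (by omega),
        key (p + 3 * s) 3 (by omega) (by omega)]
      exact h123
  · obtain h₁ | h₁ : (p + s) / q = 0 ∨ (p + s) / q = 1 := by
      rcases lt_or_ge (p + s) q with h' | h'
      · exact .inl (key _ 0 (by omega) (by omega))
      · exact .inr (key _ 1 (by omega) (by omega))
    all_goals
      obtain h₂ | h₂ | h₂ : (p + 2 * s) / q = 0 ∨ (p + 2 * s) / q = 1 ∨ (p + 2 * s) / q = 2 := by
        rcases lt_or_ge (p + 2 * s) q with h' | h'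
        · exact .inl (key _ 0 (by omega) (by omega))
        rcases lt_or_ge (p + 2 * s) (2 * q) with h'' | h''
        · exact .inr (.inl (key _ 1 (by omega) (by omega)))
        · exact .inr (.inr (key _ 2 (by omega) (by omega)))
    all_goals
      obtain h₃ | h₃ : (p + 3 * s) / q = 1 ∨ (p + 3 * s) / q = 2 := by
        rcases lt_or_ge (p + 3 * s) (2 * q) with h' | h'
        · exact .inl (key _ 1 (by omega) (by omega))
        · exact .inr (key _ 2 (by omega) (by omega))
    all_goals
      have b₁ := Nat.div_add_mod (p + s) q
      have b₂ := Nat.div_add_mod (p + 2 * s) q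
      have b₃ := Nat.div_add_mod (p + 3 * s) q
      have c₁ := Nat.mod_lt (p + s) hq
      have c₂ := Nat.mod_lt (p + 2 * s) hq
      have c₃ := Nat.mod_lt (p + 3 * s) hq
      simp only [h₁, h₂, h₃] at b₁ b₂ b₃ ⊢
      first | with_reducible assumption | (exfalso; omega)

lemma two_mul_sum_range_sub (N : ℕ) : 2 * ∑ s ∈ range N, (N - s) = N * (N + 1) := by
  have h : ∑ s ∈ range N, (N - s) = ∑ s ∈ range (N + 1), s := by
    rw [← sum_range_reflect (fun s => s) (N + 1), sum_range_succ]
    simp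
  rw [h, mul_comm, sum_range_id_mul_two]; simp [mul_comm]

lemma two_mul_sum_range_id_add (N : ℕ) :
    2 * ∑ s ∈ range N, s + N = N * N := by
  have h := sum_range_id_mul_two N
  rcases N with _ | N
  · simp
  · simp only [Nat.add_sub_cancel] at h
    linarith

/-- A lower bound for the number of lattice points in the two triangles `p + 3 s < q` and
`3 q ≤ p + 3 s` of the square `[0, q)²`, where `q = 6 u`. -/
lemma card_triangles_ge (u : ℕ) :
    12 * u ^ 2 ≤ 3 * u + #((range (6 * u) ×ˢ range (6 * u)).filter fun x =>
      x.2 + 3 * x.1 < 6 * u ∨ 3 * (6 * u) ≤ x.2 + 3 * x.1) := by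
  rw [card_filter, sum_product]
  have hcol : ∀ s ∈ range (6 * u), (6 * u - 3 * s) + (3 * s - 12 * u) ≤
      ∑ p ∈ range (6 * u), if p + 3 * s < 6 * u ∨ 3 * (6 * u) ≤ p + 3 * s then 1 else 0 := by
    intro s hs
    rw [mem_range] at hs
    rw [← card_filter]
    rcases le_or_gt (3 * s) (6 * u) with h | h
    · calc _ = #(range (6 * u - 3 * s)) := by rw [card_range]; omega
        _ ≤ _ := card_le_card fun p hp => by
          simp only [mem_range, mem_filter] at hp ⊢; omega
    · calc _ = #(Ico (18 * u - 3 * s) (6 * u)) ⊓ (3 * s - 12 * u) := by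
            rw [Nat.card_Ico, min_def]; split_ifs <;> omega
        _ ≤ #(Ico (18 * u - 3 * s) (6 * u)) := inf_le_left
        _ ≤ _ := card_le_card fun p hp => by
          simp only [mem_range, mem_filter, mem_Ico] at hp ⊢; omega
  have hsum := sum_le_sum hcol
  have hsplit : ∑ s ∈ range (2 * u), 3 * (2 * u - s) + ∑ s ∈ range (2 * u), 3 * s ≤
      ∑ s ∈ range (6 * u), ((6 * u - 3 * s) + (3 * s - 12 * u)) := by
    rw [sum_add_distrib]
    gcongr ?_ + ?_
    · calc _ = ∑ s ∈ range (2 * u), (6 * u - 3 * s) := sum_congr rfl fun s _ => by omega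
        _ ≤ _ := sum_le_sum_of_subset (range_subset_range.2 (by omega))
    · calc _ = ∑ s ∈ range (2 * u), (3 * (4 * u + s) - 12 * u) :=
            sum_congr rfl fun s _ => by omega
        _ ≤ ∑ s ∈ range (4 * u + 2 * u), (3 * s - 12 * u) := by
            rw [sum_range_add]; exact Nat.le_add_left _ _
        _ = _ := by rw [← Nat.add_mul]
  rw [← mul_sum, ← mul_sum] at hsplit
  have h₁ := two_mul_sum_range_sub (2 * u)
  have h₂ := two_mul_sum_range_id_add (2 * u)
  nlinarith

lemma sum_card_blockPairs_le (u : ℕ) :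
    ∑ x ∈ range (6 * u) ×ˢ range (6 * u), #(blockPairs ((x.2 + x.1) / (6 * u))
      ((x.2 + 2 * x.1) / (6 * u)) ((x.2 + 3 * x.1) / (6 * u))) ≤ 1632 * u ^ 2 + 42 * u := by
  refine (sum_le_sum fun x hx => card_blockPairs_le (mem_range.1 (mem_product.1 hx).2)
    (mem_range.1 (mem_product.1 hx).1)).trans ?_
  have hc := card_triangles_ge u
  have hadd := card_filter_add_card_filter_not (s := range (6 * u) ×ˢ range (6 * u))
    fun x => x.2 + 3 * x.1 < 6 * u ∨ 3 * (6 * u) ≤ x.2 + 3 * x.1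
  rw [sum_ite, sum_const, sum_const, smul_eq_mul, smul_eq_mul]
  rw [card_product, card_range] at hadd
  nlinarith

/-- The elements of `Z_n` beyond the first `20` blocks of length `q`, or within `360` of the right
end of such a block. -/
def shallow (n q : ℕ) [NeZero n] : Finset (ZMod n) :=
  univ.filter fun x => 20 ≤ x.val / q ∨ q ≤ x.val % q + 360

lemma card_shallow_le {n u : ℕ} [NeZero n] (hu : 20 ≤ u) (hn : n < 120 * u + 120) :
    #(shallow n (6 * u)) ≤ 10080 := by
  have hsub : ∀ x ∈ shallow n (6 * u), (x.val / (6 * u), x.val % (6 * u)) ∈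
      range 21 ×ˢ (range 120 ∪ Ico (6 * u - 360) (6 * u)) := by
    intro x hx
    simp only [shallow, mem_filter, mem_univ, true_and] at hx
    have hlt := x.val_lt
    have hm := Nat.mod_lt x.val (show 0 < 6 * u by omega)
    have hd : x.val / (6 * u) < 21 := (Nat.div_lt_iff_lt_mul (by omega)).2 (by omega)
    simp only [mem_product, mem_union, mem_range, mem_Ico]
    refine ⟨hd, ?_⟩
    rcases hx with hx | hx
    · have h := Nat.div_add_mod x.val (6 * u)
      rw [show x.val / (6 * u) = 20 by omega] at h
      omega
    · omega
  refine (card_le_card_of_injOn _ hsub ?_).trans ?_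
  · intro x _ y _ h
    simp only [Prod.mk.injEq] at h
    apply ZMod.val_injective
    rw [← Nat.div_add_mod x.val (6 * u), ← Nat.div_add_mod y.val (6 * u), h.1, h.2]
  · rw [card_product, card_range]
    have := card_union_le (range 120) (Ico (6 * u - 360) (6 * u))
    rw [card_range, Nat.card_Ico] at this
    omega

/-- Off the shallow elements, the block of a term of a progression can be computed in `ℕ`. -/
lemma blockColor_val_add_nsmul {n u : ℕ} [NeZero n] (hn : 120 * u ≤ n)
    (hn' : n < 120 * u + 120) (a d : ZMod n) {l : ℕ} (hl : l ≤ 3)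
    (h : a + l • d ∉ shallow n (6 * u)) :
    blockColor ((a + l • d).val / (6 * u)) = blockColor ((a.val + l * d.val) / (6 * u)) := by
  simp only [shallow, mem_filter, mem_univ, true_and, not_or, not_le] at h
  have hval : (a + l • d).val = (a.val + l * d.val) % n := by
    rw [← ZMod.val_natCast]; simp
  have hdm := Nat.div_add_mod (a.val + l * d.val) n
  rw [← hval] at hdm
  set x := (a + l • d).val
  have hw : (a.val + l * d.val) / n < 4 := by
    rw [Nat.div_lt_iff_lt_mul (NeZero.pos n)]
    have := a.val_lt
    have := d.val_lt
    nlinarith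
  set w := (a.val + l * d.val) / n
  obtain ⟨t, rfl⟩ := Nat.exists_eq_add_of_le hn
  have htw : t * w ≤ 357 := by nlinarith
  have hx := Nat.div_add_mod x (6 * u)
  have hq : 0 < 6 * u := by omega
  have : a.val + l * d.val = (x % (6 * u) + t * w) + (6 * u) * (20 * w + x / (6 * u)) := by
    nlinarith
  rw [this, Nat.add_mul_div_left _ _ hq, Nat.div_eq_of_lt (a := x % (6 * u) + t * w) (by omega), zero_add,
    blockColor_add_mul]

lemma card_filter_add_nsmul_mem {n : ℕ} [NeZero n] (X : Finset (ZMod n)) (l : ℕ) :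
    #(univ.filter fun p : ZMod n × ZMod n => p.1 + l • p.2 ∈ X) ≤ #X * n := by
  calc _ ≤ #(X ×ˢ (univ : Finset (ZMod n))) := by
        refine card_le_card_of_injOn (fun p => (p.1 + l • p.2, p.2)) (fun p hp => ?_) ?_
        · simpa using hp
        · rintro ⟨a, d⟩ _ ⟨a', d'⟩ _ h
          simp only [Prod.mk.injEq] at h
          obtain ⟨h, rfl⟩ := h
          simpa using h
    _ = _ := by rw [card_product, card_univ, ZMod.card]

lemma monoAPCount_blockColor_le {n u : ℕ} (hu : 20 ≤ u) (hn : 120 * u ≤ n)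
    (hn' : n < 120 * u + 120) :
    monoAPCount n 4 (fun x => blockColor (x.val / (6 * u))) ≤
      1632 * u ^ 2 + 42 * u + 50400 * n := by
  classical
  have : NeZero n := ⟨by omega⟩
  set q := 6 * u with hq
  have hq0 : 0 < q := by omega
  set X := shallow n q with hX
  let F (l : ℕ) := univ.filter fun p : ZMod n × ZMod n => p.1 + l • p.2 ∈ X
  let D := univ.filter fun p : ZMod n × ZMod n => p.2 ∈ X
  let good := univ.filter fun p : ZMod n × ZMod n =>
    (∀ l < 4, blockColor ((p.1 + l • p.2).val / q) = blockColor (p.1.val / q)) ∧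
    (∀ l < 4, p.1 + l • p.2 ∉ X) ∧ p.2 ∉ X
  have hXc : #X ≤ 10080 := card_shallow_le hu hn'
  have hF : ∀ l, #(F l) ≤ 10080 * n := fun l =>
    (card_filter_add_nsmul_mem X l).trans (Nat.mul_le_mul_right n hXc)
  have hD : #D ≤ 10080 * n := by
    have : D = (univ : Finset (ZMod n)) ×ˢ X := by ext; simp [D]
    rw [this, card_product, card_univ, ZMod.card, mul_comm]
    exact Nat.mul_le_mul_right n hXc
  have hgood : #good ≤ 1632 * u ^ 2 + 42 * u := by
    refine le_trans ?_ (sum_card_blockPairs_le u)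
    rw [← card_sigma, ← hq]
    refine card_le_card_of_injOn (fun p => ⟨(p.2.val % q, p.1.val % q),
      (p.1.val / q, p.2.val / q)⟩) (fun p hp => ?_) ?_
    · obtain ⟨a, d⟩ := p
      simp only [good, coe_filter, mem_univ, true_and, Set.mem_ofPred_eq] at hp
      obtain ⟨hmono, hdeep, hd⟩ := hp
      have ha := hdeep 0 (by norm_num)
      simp only [hX, shallow, mem_filter, mem_univ, true_and, not_or, not_le, zero_smul,
        add_zero] at ha hd
      have hkey : ∀ l < 4, blockColor (a.val / q + l * (d.val / q) +
          (a.val % q + l * (d.val % q)) / q) = blockColor (a.val / q) := by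
        intro l hl
        rw [← hmono l hl, blockColor_val_add_nsmul hn hn' a d (by omega) (hdeep l hl), ← hq]
        congr 1
        have h₁ := Nat.div_add_mod a.val q
        have h₂ := Nat.div_add_mod d.val q
        have : a.val + l * d.val = (a.val % q + l * (d.val % q)) +
            q * (a.val / q + l * (d.val / q)) := by
          conv_lhs => rw [← h₁, ← h₂]
          ring
        rw [this, Nat.add_mul_div_left _ _ hq0, add_comm]
      simp only [coe_sigma, Set.mem_sigma_iff, mem_coe, mem_product, mem_range, blockPairs,
        mem_filter]
      refine ⟨⟨Nat.mod_lt _ hq0, Nat.mod_lt _ hq0⟩, ⟨ha.1, hd.1⟩, ?_, hkey 2 (by norm_num),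
        hkey 3 (by norm_num)⟩
      simpa using hkey 1 (by norm_num)
    · rintro ⟨a, d⟩ _ ⟨a', d'⟩ _ h
      simp only [Sigma.mk.injEq, Prod.mk.injEq, heq_eq_eq] at h
      obtain ⟨⟨h₁, h₂⟩, h₃, h₄⟩ := h
      refine Prod.ext (ZMod.val_injective n ?_) (ZMod.val_injective n ?_)
      · rw [← Nat.div_add_mod a.val q, ← Nat.div_add_mod a'.val q, h₂, h₃]
      · rw [← Nat.div_add_mod d.val q, ← Nat.div_add_mod d'.val q, h₁, h₄]
  have hcover : {p : ZMod n × ZMod n | ∀ i < 4, blockColor ((p.1 + i • p.2).val / q) =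
      blockColor (p.1.val / q)} ⊆ ↑(good ∪ ((range 4).biUnion F ∪ D)) := by
    intro p hp
    simp only [good, F, D, coe_union, coe_filter, coe_biUnion, Set.mem_union, Set.mem_ofPred_eq,
      mem_univ, true_and, Set.mem_iUnion, mem_coe, mem_range, exists_prop] at hp ⊢
    by_cases h₁ : ∃ l, l < 4 ∧ p.1 + l • p.2 ∈ X
    · exact .inr (.inl h₁)
    by_cases h₂ : p.2 ∈ X
    · exact .inr (.inr h₂)
    push Not at h₁
    exact .inl ⟨hp, h₁, h₂⟩
  have hU : #((range 4).biUnion F) ≤ 4 * (10080 * n) := by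
    simpa using card_biUnion_le_card_mul (range 4) F _ fun l _ => hF l
  have h₁ := Set.ncard_le_ncard hcover (finite_toSet _)
  rw [Set.ncard_coe_finset] at h₁
  have h₂ := card_union_le good ((range 4).biUnion F ∪ D)
  have h₃ := card_union_le ((range 4).biUnion F) D
  change Set.ncard {p : ZMod n × ZMod n | ∀ i < 4, blockColor ((p.1 + i • p.2).val / q) =
    blockColor (p.1.val / q)} ≤ _
  omega

theorem m4_upper_bound_odd :
    ∀ ε : ℝ, 0 < ε → ∃ N : ℕ, ∀ n : ℕ, N ≤ n → Odd n →
      ∃ c : ZMod n → Fin 2, (monoAPCount n 4 c : ℝ) ≤ (17 / 150 + ε) * (n : ℝ) ^ 2 := by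
  intro ε hε
  obtain ⟨N, hN⟩ := exists_nat_gt (50401 / ε)
  refine ⟨max N 2400, fun n hn _ => ⟨fun x => blockColor (x.val / (6 * (n / 120))), ?_⟩⟩
  have hu : 120 * (n / 120) ≤ n := Nat.mul_div_le n 120
  have hM := monoAPCount_blockColor_le (n := n) (u := n / 120) (by omega) hu (by omega)
  have hM' : (monoAPCount n 4 (fun x => blockColor (x.val / (6 * (n / 120)))) : ℝ) ≤
      1632 * ((n / 120 : ℕ) : ℝ) ^ 2 + 42 * ((n / 120 : ℕ) : ℝ) + 50400 * n := by
    exact_mod_cast hM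
  have hu' : 120 * ((n / 120 : ℕ) : ℝ) ≤ n := by exact_mod_cast hu
  have hu0 : (0 : ℝ) ≤ ((n / 120 : ℕ) : ℝ) := Nat.cast_nonneg _
  have hnN : (N : ℝ) ≤ n := by exact_mod_cast (le_max_left _ _).trans hn
  have hεn : 50401 ≤ ε * n := by
    rw [div_lt_iff₀ hε] at hN
    nlinarith
  have hsq : (120 * ((n / 120 : ℕ) : ℝ)) ^ 2 ≤ (n : ℝ) ^ 2 := by gcongr
  nlinarith [mul_le_mul_of_nonneg_right hεn (Nat.cast_nonneg (α := ℝ) n)]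
end

section
/- For every ε > 0 there exists N such that for every even integer n ≥ N there exists a 2-coloring c of Z_n with M_4(n,c) ≤ (8543/72600 + ε)·n². -/
/-! ### Counting binary digits -/

/-- The number of ones among the binary digits of `x`, for `x < 2 ^ 2 ^ j`. It is written with the
raw operations on `ℕ` so that the kernel evaluates it quickly. -/
def binaryOnes (j : ℕ) : ℕ → ℕ :=
  Nat.rec (fun x => x)
    (fun i ones x => Nat.rec Nat.zero
      (fun y _ => Nat.add (ones (Nat.mod (Nat.succ y) (Nat.pow 2 (Nat.pow 2 i))))
        (ones (Nat.div (Nat.succ y) (Nat.pow 2 (Nat.pow 2 i))))) x) j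

lemma binaryOnes_zero_right (j : ℕ) : binaryOnes j 0 = 0 := by
  cases j <;> rfl

lemma binaryOnes_succ (j x : ℕ) :
    binaryOnes (j + 1) x = binaryOnes j (x % 2 ^ 2 ^ j) + binaryOnes j (x / 2 ^ 2 ^ j) := by
  cases x with
  | zero => simp [binaryOnes_zero_right]
  | succ y => rfl

lemma sum_testBit_eq_binaryOnes (j : ℕ) :
    ∀ x < 2 ^ 2 ^ j, ∑ i ∈ Finset.range (2 ^ j), (x.testBit i).toNat = binaryOnes j x := by
  induction j with
  | zero =>
    intro x hx
    have hx : x < 2 := by simpa using hx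
    interval_cases x <;> rfl
  | succ j ih =>
    intro x hx
    have hpow : 2 ^ 2 ^ (j + 1) = 2 ^ 2 ^ j * 2 ^ 2 ^ j := by rw [← pow_add]; ring_nf
    rw [binaryOnes_succ, ← ih _ (Nat.mod_lt _ (by positivity)),
      ← ih _ (Nat.div_lt_of_lt_mul (hpow ▸ hx)), pow_succ, mul_two, Finset.sum_range_add]
    congr 1
    · refine Finset.sum_congr rfl fun i hi => ?_
      simp [Nat.testBit_mod_two_pow, Finset.mem_range.mp hi]
    · refine Finset.sum_congr rfl fun i _ => ?_
      rw [Nat.testBit_div_two_pow, add_comm]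

/-! ### A periodic coloring of `1280` cells -/

/-- The bit mask of color `1`: a pattern of `20` blocks of length `64`, repeated four times. -/
def maskOne : ℕ :=
  (2 ^ 64 - 1) * (2 ^ 64 + 2 ^ 320 + 2 ^ 384 + 2 ^ 448 + 2 ^ 576 + 2 ^ 640 + 2 ^ 768 + 2 ^ 832
    + 2 ^ 896 + 2 ^ 1152) * (1 + 2 ^ 1280 + 2 ^ 2560 + 2 ^ 3840)

/-- The bit mask of color `0`. -/
def maskZero : ℕ := 2 ^ 5120 - 1 - maskOne

/-- The cells `x` such that points of the cells `x - d`, `x`, `x + d`, `x + 2 d` in arithmetic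
progression may all lie in cells of the bit mask `F`. -/
def progressionMask (F d : ℕ) : ℕ :=
  F &&& ((F ||| F >>> 1) >>> (1279 - d)) &&& ((F ||| F >>> 1) >>> d) &&&
    ((F ||| F >>> 1 ||| F >>> 2) >>> (2 * d))

/-- The cells containing the second term of a possibly monochromatic 4-AP whose difference lies in
the cell `d`. -/
def monoMask (d : ℕ) : ℕ :=
  (progressionMask maskOne d ||| progressionMask maskZero d) % 2 ^ 1280

/-- The number of pairs of cells admitting a monochromatic 4-AP, with difference in a cell
below `k`. -/
def monoCellCount (k : ℕ) : ℕ := Nat.rec 0 (fun d s => binaryOnes 11 (monoMask d) + s) k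

lemma monoCellCount_le : 72600 * monoCellCount 1280 ≤ 8543 * 1280 ^ 2 := by decide +kernel

lemma monoCellCount_eq_sum (k : ℕ) :
    monoCellCount k = ∑ d ∈ Finset.range k, binaryOnes 11 (monoMask d) := by
  have hrec (f : ℕ → ℕ) : ∑ d ∈ Finset.range k, f d = Nat.rec 0 (fun d s => f d + s) k := by
    induction k with
    | zero => rfl
    | succ k ih => rw [Finset.sum_range_succ, ih, add_comm]
  exact (hrec _).symm

lemma testBit_mask_periodic : ∀ i < 4, ∀ j < 1280,
    maskOne.testBit (1280 * i + j) = maskOne.testBit j ∧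
      maskZero.testBit (1280 * i + j) = !maskOne.testBit j := by
  decide +kernel

lemma testBit_maskOne_mod {i : ℕ} (hi : i < 5120) :
    maskOne.testBit i = maskOne.testBit (i % 1280) := by
  simpa [Nat.div_add_mod] using
    (testBit_mask_periodic (i / 1280) (by omega) (i % 1280) (by omega)).1

lemma testBit_maskZero {i : ℕ} (hi : i < 5120) :
    maskZero.testBit i = !maskOne.testBit (i % 1280) := by
  simpa [Nat.div_add_mod] using
    (testBit_mask_periodic (i / 1280) (by omega) (i % 1280) (by omega)).2

lemma testBit_maskZero_mod {i : ℕ} (hi : i < 5120) :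
    maskZero.testBit i = maskZero.testBit (i % 1280) := by
  rw [testBit_maskZero hi, testBit_maskZero (by omega), Nat.mod_mod]

lemma card_monoMask_eq (k : ℕ) :
    ((Finset.range 1280 ×ˢ Finset.range k).filter fun p => (monoMask p.2).testBit p.1).card =
      monoCellCount k := by
  have hcol (d : ℕ) :
      ∑ x ∈ Finset.range 1280, ((monoMask d).testBit x).toNat = binaryOnes 11 (monoMask d) := by
    have hlt : monoMask d < 2 ^ 1280 := Nat.mod_lt _ (Nat.two_pow_pos _)
    rw [← sum_testBit_eq_binaryOnes 11 _
      (hlt.trans_le (Nat.pow_le_pow_right (by norm_num) (by norm_num)))]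
    refine Finset.sum_subset (Finset.range_subset_range.2 (by norm_num)) fun x _ hx => ?_
    rw [Nat.testBit_lt_two_pow (hlt.trans_le
      (Nat.pow_le_pow_right (by norm_num) (by simpa using hx)))]
    rfl
  rw [Finset.card_filter, Finset.sum_product_right, monoCellCount_eq_sum]
  refine Finset.sum_congr rfl fun d _ => ?_
  rw [← hcol]
  refine Finset.sum_congr rfl fun x _ => ?_
  cases (monoMask d).testBit x <;> rfl

/-! ### Cells of `Z_n` -/

/-- The index of the cell containing `x` when `Z_n` is cut into `1280` nearly equal intervals. -/
def cell {n : ℕ} (x : ZMod n) : ℕ := 1280 * x.val / n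

section Cells

variable {n : ℕ} [NeZero n]

lemma cell_lt (x : ZMod n) : cell x < 1280 := by
  rw [cell, Nat.div_lt_iff_lt_mul (Nat.pos_of_neZero n)]
  exact Nat.mul_lt_mul_of_pos_left x.val_lt (by norm_num)

lemma exists_cell_add_nsmul (k : ℕ) (x d : ZMod n) :
    ∃ e, ∃ j ≤ k, cell (x + k • d) + 1280 * e = cell x + k * cell d + j := by
  have hn := Nat.pos_of_neZero n
  have hval : (x + k • d).val = (x.val + k * d.val) % n := by
    rw [← ZMod.val_natCast]
    simp
  have hdiv : cell (x + k • d) + 1280 * ((x.val + k * d.val) / n) =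
      (1280 * x.val + k * (1280 * d.val)) / n := by
    rw [cell, hval, ← Nat.add_mul_div_left _ _ hn]
    congr 1
    have := Nat.mod_add_div (x.val + k * d.val) n
    linear_combination 1280 * this
  have hlow : cell x + k * cell d ≤ (1280 * x.val + k * (1280 * d.val)) / n := by
    rw [Nat.le_div_iff_mul_le hn]
    calc (cell x + k * cell d) * n = cell x * n + k * (cell d * n) := by ring
      _ ≤ _ := Nat.add_le_add (Nat.div_mul_le_self _ _)
        (Nat.mul_le_mul_left k (Nat.div_mul_le_self _ _))
  have hhigh : (1280 * x.val + k * (1280 * d.val)) / n < cell x + k * cell d + k + 1 := by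
    rw [Nat.div_lt_iff_lt_mul hn]
    calc 1280 * x.val + k * (1280 * d.val)
        < (cell x + 1) * n + k * ((cell d + 1) * n) :=
          add_lt_add_of_lt_of_le (Nat.lt_mul_of_div_lt (Nat.lt_succ_self _) hn)
            (Nat.mul_le_mul_left k (Nat.lt_mul_of_div_lt (Nat.lt_succ_self _) hn).le)
      _ = _ := by ring
  exact ⟨_, _, by omega, hdiv.trans (Nat.add_sub_cancel' hlow).symm⟩

lemma card_cell_eq_le (m : ℕ) :
    (Finset.univ.filter fun x : ZMod n => cell x = m).card ≤ n / 1280 + 1 := by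
  have hn := Nat.pos_of_neZero n
  rw [← Finset.card_image_of_injective _ (ZMod.val_injective n)]
  refine (Finset.card_le_card (t := Finset.Ico ((n * m + 1279) / 1280)
    ((n * m + 1279) / 1280 + (n / 1280 + 1))) ?_).trans (by simp)
  intro y hy
  obtain ⟨x, hx, rfl⟩ := Finset.mem_image.1 hy
  have hx : 1280 * x.val / n = m := (Finset.mem_filter.1 hx).2
  have h₁ := Nat.div_add_mod (1280 * x.val) n
  have h₂ := Nat.mod_lt (1280 * x.val) hn
  rw [hx] at h₁
  rw [Finset.mem_Ico]
  omega

lemma testBit_progressionMask {F : ℕ}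
    (hF : ∀ i < 5120, F.testBit i = F.testBit (i % 1280)) (a d : ZMod n)
    (h : ∀ i < 4, F.testBit (cell (a + i • d))) :
    (progressionMask F (cell d)).testBit (cell (a + d)) := by
  have hbit (y : ZMod n) {i e f : ℕ} (hi : i < 5120) (he : i + 1280 * f = cell y + 1280 * e)
      (hy : F.testBit (cell y)) : F.testBit i := by
    have := cell_lt y
    rwa [hF i hi, show i % 1280 = cell y by omega]
  have h0 := h 0 (by norm_num)
  have h1 := h 1 (by norm_num)
  have h2 := h 2 (by norm_num)
  have h3 := h 3 (by norm_num)
  obtain ⟨e₀, j₀, hj₀, he₀⟩ := exists_cell_add_nsmul 1 a d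
  obtain ⟨e₁, j₁, hj₁, he₁⟩ := exists_cell_add_nsmul 1 (a + d) d
  obtain ⟨e₂, j₂, hj₂, he₂⟩ := exists_cell_add_nsmul 2 (a + d) d
  rw [show a + d + 1 • d = a + 2 • d by abel] at he₁
  rw [show a + d + 2 • d = a + 3 • d by abel] at he₂
  simp only [one_smul, zero_smul, add_zero, one_mul] at h0 h1 he₀ he₁
  have := cell_lt a
  have := cell_lt d
  have := cell_lt (a + d)
  simp only [progressionMask, Nat.testBit_and, Nat.testBit_or, Nat.testBit_shiftRight,
    Bool.and_eq_true, Bool.or_eq_true]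
  refine ⟨⟨⟨h1, ?_⟩, ?_⟩, ?_⟩
  · obtain rfl | rfl : j₀ = 1 ∨ j₀ = 0 := by omega
    · exact Or.inl (hbit a (e := 1) (f := e₀) (by omega) (by omega) h0)
    · exact Or.inr (hbit a (e := 1) (f := e₀) (by omega) (by omega) h0)
  · obtain rfl | rfl : j₁ = 0 ∨ j₁ = 1 := by omega
    · exact Or.inl (hbit _ (e := e₁) (f := 0) (by omega) (by omega) h2)
    · exact Or.inr (hbit _ (e := e₁) (f := 0) (by omega) (by omega) h2)
  · obtain rfl | rfl | rfl : j₂ = 0 ∨ j₂ = 1 ∨ j₂ = 2 := by omega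
    · exact Or.inl (Or.inl (hbit _ (e := e₂) (f := 0) (by omega) (by omega) h3))
    · exact Or.inl (Or.inr (hbit _ (e := e₂) (f := 0) (by omega) (by omega) h3))
    · exact Or.inr (hbit _ (e := e₂) (f := 0) (by omega) (by omega) h3)

/-- The 2-coloring of `Z_n` by the color of the cell. -/
def cellColoring (x : ZMod n) : Fin 2 := if maskOne.testBit (cell x) then 1 else 0

lemma testBit_monoMask (a d : ZMod n)
    (h : ∀ i < 4, cellColoring (a + i • d) = cellColoring a) :
    (monoMask (cell d)).testBit (cell (a + d)) := by
  have hc (x y : ZMod n) :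
      cellColoring x = cellColoring y ↔ maskOne.testBit (cell x) = maskOne.testBit (cell y) := by
    simp only [cellColoring]
    cases maskOne.testBit (cell x) <;> cases maskOne.testBit (cell y) <;> simp
  simp only [monoMask, Nat.testBit_mod_two_pow, cell_lt, decide_true, Bool.true_and,
    Nat.testBit_or, Bool.or_eq_true]
  cases ha : maskOne.testBit (cell a) with
  | true =>
    refine Or.inl (testBit_progressionMask (fun i => testBit_maskOne_mod) a d fun i hi => ?_)
    rw [(hc _ _).1 (h i hi), ha]
  | false =>
    refine Or.inr (testBit_progressionMask (fun i => testBit_maskZero_mod) a d fun i hi => ?_)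
    rw [testBit_maskZero ((cell_lt _).trans (by norm_num)), Nat.mod_eq_of_lt (cell_lt _),
      (hc _ _).1 (h i hi), ha]
    rfl

lemma card_cell_add_eq_and_cell_eq_le (q : ℕ × ℕ) :
    (Finset.univ.filter fun p : ZMod n × ZMod n => (cell (p.1 + p.2), cell p.2) = q).card ≤
      (n / 1280 + 1) ^ 2 := by
  have hinj : Function.Injective fun p : ZMod n × ZMod n => (p.1 + p.2, p.2) := by
    rintro ⟨a, d⟩ ⟨a', d'⟩ h
    obtain ⟨h, h'⟩ := Prod.mk.inj h
    change d = d' at h'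
    subst h'
    exact Prod.ext (add_right_cancel h) rfl
  rw [← Finset.card_image_of_injective _ hinj, sq]
  refine (Finset.card_le_card (t := (Finset.univ.filter fun x : ZMod n => cell x = q.1) ×ˢ
    (Finset.univ.filter fun x : ZMod n => cell x = q.2)) ?_).trans ?_
  · intro y hy
    obtain ⟨p, hp, rfl⟩ := Finset.mem_image.1 hy
    simpa [Prod.ext_iff] using hp
  · rw [Finset.card_product]
    exact Nat.mul_le_mul (card_cell_eq_le _) (card_cell_eq_le _)

lemma monoAPCount_cellColoring_le :
    monoAPCount n 4 cellColoring ≤ (n / 1280 + 1) ^ 2 * monoCellCount 1280 := by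
  classical
  rw [monoAPCount, Set.ncard_eq_toFinset_card', ← card_monoMask_eq]
  refine Finset.card_le_mul_card_image_of_maps_to
    (f := fun p : ZMod n × ZMod n => (cell (p.1 + p.2), cell p.2)) ?_ _ fun q _ =>
      (Finset.card_le_card (Finset.filter_subset_filter _ (Finset.subset_univ _))).trans
        (card_cell_add_eq_and_cell_eq_le q)
  intro p hp
  rw [Set.mem_toFinset] at hp
  simp [cell_lt, testBit_monoMask p.1 p.2 hp]

end Cells

theorem m4_upper_bound_even :
    ∀ ε : ℝ, 0 < ε → ∃ N : ℕ, ∀ n : ℕ, N ≤ n → Even n →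
      ∃ c : ZMod n → Fin 2, (monoAPCount n 4 c : ℝ) ≤ (8543 / 72600 + ε) * (n : ℝ) ^ 2 := by
  intro ε hε
  obtain ⟨N, hN⟩ := exists_nat_ge (3840 / ε)
  refine ⟨max N 1280, fun n hn _ => ?_⟩
  obtain ⟨hNn, hn⟩ := max_le_iff.1 hn
  have : NeZero n := ⟨by omega⟩
  refine ⟨cellColoring, ?_⟩
  have hn' : (1280 : ℝ) ≤ n := by exact_mod_cast hn
  have hεn : 3840 ≤ ε * n := by
    rw [mul_comm, ← div_le_iff₀ hε]
    exact hN.trans (by exact_mod_cast hNn)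
  have hcells := monoCellCount_le
  have hcount := monoAPCount_cellColoring_le (n := n)
  generalize monoCellCount 1280 = m at hcells hcount
  have hcells : (m : ℝ) ≤ 8543 / 72600 * 1280 ^ 2 := by
    have : (72600 : ℝ) * m ≤ 8543 * 1280 ^ 2 := by exact_mod_cast hcells
    linarith
  calc (monoAPCount n 4 cellColoring : ℝ)
      ≤ ((n / 1280 : ℕ) + 1) ^ 2 * m := by exact_mod_cast hcount
    _ ≤ ((n : ℝ) / 1280 + 1) ^ 2 * (8543 / 72600 * 1280 ^ 2) := by
        gcongr
        exact Nat.cast_div_le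
    _ ≤ (8543 / 72600 + ε) * (n : ℝ) ^ 2 := by
        nlinarith [mul_le_mul_of_nonneg_right hεn (by positivity : (0 : ℝ) ≤ n)]
end

section
/- For every ε > 0 there exists N such that for every even integer n ≥ N there exists a 2-coloring c of Z_n with M_5(n,c) ≤ (3647/65712 + ε)·n². -/
namespace ArithProgColoring

/-- The bits of this number colour the `59` equal arcs of the circle. -/
def arcBit (i : ℕ) : Bool := Nat.testBit 314762587583931457 (i % 59)

/-- The progression with middle arc `A` and difference arc `D` is monochromatic when its outer
terms are displaced by `-q, -p, u, v` arcs, where `w = ((p, q), (u, v))`. -/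
def monoTest (w : (ℕ × ℕ) × (ℕ × ℕ)) (A D : ℕ) : Bool :=
  (arcBit (A + (59 - D) + (59 - w.1.1)) == arcBit A) &&
  (arcBit (A + D + w.2.1) == arcBit A) &&
  (arcBit (A + 2 * (59 - D) + (59 - w.1.2)) == arcBit A) &&
  (arcBit (A + 2 * D + w.2.2) == arcBit A)

/-- The displacement `w` occurs at some point of the cell `(j, k)` of the `80 × 80` grid. -/
def cellTest (w : (ℕ × ℕ) × (ℕ × ℕ)) (j k : ℕ) : Bool :=
  (Nat.blt (j + k) ((w.2.1 + 1) * 80)) &&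
  (Nat.blt (w.2.1 * 80) (j + k + 2)) &&
  (Nat.blt (j + 2 * k) ((w.2.2 + 1) * 80)) &&
  (Nat.blt (w.2.2 * 80) (j + 2 * k + 3)) &&
  (Nat.blt (j + w.1.1 * 80) (k + 81)) &&
  (Nat.blt k (j + 1 + w.1.1 * 80)) &&
  (Nat.blt (j + w.1.2 * 80) (2 * k + 82)) &&
  (Nat.blt (2 * k) (j + 1 + w.1.2 * 80))

/-- The number of pairs below `m` passing a test. -/
def pairCount (f : ℕ → ℕ → Bool) (m : ℕ) : ℕ :=
  ∑ y ∈ Finset.range m, Nat.count (fun x => f x y = true) m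

/-- The possible displacements of the two terms on one side of the middle term. -/
def sideShifts : Finset (ℕ × ℕ) := {(0, 0), (0, 1), (1, 1), (1, 2)}

theorem sum_pairCount_mul_pairCount :
    ∑ w ∈ sideShifts ×ˢ sideShifts, pairCount (monoTest w) 59 * pairCount (cellTest w) 80 =
      1231812 := by
  decide +kernel

/-- The arc of an integer, on a circle of length `n` cut into `59` arcs. -/
def arc (n : ℕ) (x : ℤ) : ℕ := ((x * 59 / n) % 59).toNat

/-- The `n`-periodic colouring of the integers by arcs. -/
def intColor (n : ℕ) (x : ℤ) : Fin 2 := if arcBit (arc n x) then 1 else 0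

theorem arcBit_congr {i j : ℕ} (h : i % 59 = j % 59) : arcBit i = arcBit j := by
  simp only [arcBit, h]

theorem intColor_eq_iff {n : ℕ} {x y : ℤ} :
    intColor n x = intColor n y ↔ arcBit (arc n x) = arcBit (arc n y) := by
  unfold intColor
  cases arcBit (arc n x) <;> cases arcBit (arc n y) <;> simp

theorem intColor_add_mul {n : ℕ} (hn : 0 < n) (x z : ℤ) :
    intColor n (x + n * z) = intColor n x := by
  have h : (x + n * z) * 59 / n = x * 59 / n + z * 59 := by
    rw [show (x + n * z) * 59 = x * 59 + (z * 59) * n by ring]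
    exact Int.add_mul_ediv_right _ _ (by exact_mod_cast hn.ne')
  have harc : arc n (x + n * z) = arc n x := by
    simp only [arc, h, Int.add_mul_emod_self_right]
  rw [intColor, harc, intColor]

/-- The colouring of `ZMod n` by `59` arcs. -/
def arcColoring (n : ℕ) (z : ZMod n) : Fin 2 := intColor n z.val

theorem arcColoring_intCast {n : ℕ} [NeZero n] (x : ℤ) :
    arcColoring n (x : ZMod n) = intColor n x := by
  unfold arcColoring
  rw [ZMod.val_intCast, ← intColor_add_mul (NeZero.pos n) (x % n) (x / n), Int.emod_add_mul_ediv]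

theorem arc_add_mul {n : ℕ} (hn : 0 < n) {x y A D α δ s e : ℤ} (hx : x * 59 = n * A + α)
    (hy : y * 59 = n * D + δ) (h1 : e * n ≤ α + s * δ) (h2 : α + s * δ < (e + 1) * n) :
    arc n (x + s * y) = ((A + s * D + e) % 59).toNat := by
  have h : (x + s * y) * 59 / n = A + s * D + e := by
    have hxy : (x + s * y) * 59 = n * (A + s * D) + (α + s * δ) := by
      linear_combination hx + s * hy
    rw [Int.ediv_eq_iff_of_pos (by exact_mod_cast hn), hxy]
    constructor <;> linarith
  rw [arc, h]

theorem exists_right_shift {n α δ : ℤ} (hα : 0 ≤ α) (hα' : α < n) (hδ : 0 ≤ δ) (hδ' : δ < n) :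
    ∃ s ∈ sideShifts, (s.1 * n ≤ α + δ ∧ α + δ < (s.1 + 1) * n) ∧
      (s.2 * n ≤ α + 2 * δ ∧ α + 2 * δ < (s.2 + 1) * n) := by
  simp only [sideShifts, Finset.mem_insert, Finset.mem_singleton, exists_eq_or_imp,
    exists_eq_left, Nat.cast_zero, Nat.cast_one, Nat.cast_ofNat]
  omega

theorem exists_left_shift {n α δ : ℤ} (hα : 0 ≤ α) (hα' : α < n) (hδ : 0 ≤ δ) (hδ' : δ < n) :
    ∃ s ∈ sideShifts, (-s.1 * n ≤ α - δ ∧ α - δ < (-s.1 + 1) * n) ∧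
      (-s.2 * n ≤ α - 2 * δ ∧ α - 2 * δ < (-s.2 + 1) * n) := by
  simp only [sideShifts, Finset.mem_insert, Finset.mem_singleton, exists_eq_or_imp,
    exists_eq_left, Nat.cast_zero, Nat.cast_one, Nat.cast_ofNat]
  omega

theorem le_two_of_mem_sideShifts {s : ℕ × ℕ} (hs : s ∈ sideShifts) : s.1 ≤ 1 ∧ s.2 ≤ 2 := by
  revert s
  decide

/-- The points of the fine cell `X`, on a circle of length `n` cut into `59 * 80` cells. -/
def fineCell (n X : ℕ) : Finset ℕ := {x ∈ Finset.range n | x * 4720 / n = X}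

theorem card_fineCell_le (n X : ℕ) : (fineCell n X).card ≤ n / 4720 + 1 := by
  have hsub : fineCell n X ⊆
      Finset.Icc ((X * n + 4719) / 4720) ((X * n + 4719) / 4720 + n / 4720) := by
    intro x hx
    simp only [fineCell, Finset.mem_filter, Finset.mem_range] at hx
    obtain ⟨hxn, rfl⟩ := hx
    have h1 := Nat.div_mul_le_self (x * 4720) n
    have h2 := Nat.lt_div_mul_add (a := x * 4720) (b := n) (by omega)
    rw [Finset.mem_Icc]
    omega
  refine (Finset.card_le_card hsub).trans ?_
  rw [Nat.card_Icc]
  omega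

theorem pairCount_eq_card (f : ℕ → ℕ → Bool) (m : ℕ) :
    pairCount f m =
      ({p ∈ Finset.range m ×ˢ Finset.range m | f p.1 p.2 = true} : Finset (ℕ × ℕ)).card := by
  simp only [pairCount, Nat.count_eq_card_filter_range, Finset.card_filter,
    Finset.sum_product_right]

/-- Every monochromatic progression `x - 2y, x - y, x, x + y, x + 2y` lies in fine cells that pass
both tests for some displacement. -/
theorem exists_shift_of_mono {n x y : ℕ} (hx : x < n) (hy : y < n)
    (h : ∀ s : ℤ, -2 ≤ s → s ≤ 2 → intColor n (x + s * y) = intColor n x) :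
    ∃ w ∈ sideShifts ×ˢ sideShifts, ∃ A < 59, ∃ D < 59, ∃ j < 80, ∃ k < 80,
      monoTest w A D = true ∧ cellTest w j k = true ∧
      x ∈ fineCell n (A * 80 + j) ∧ y ∈ fineCell n (D * 80 + k) := by
  have hn : 0 < n := by omega
  have key : ∀ z < n, ∃ A < 59, ∃ j < 80, ∃ α : ℤ, z ∈ fineCell n (A * 80 + j) ∧
      (z : ℤ) * 59 = n * (A : ℕ) + α ∧ 0 ≤ α ∧ α < n ∧ (j : ℕ) * (n : ℤ) ≤ 80 * α ∧
      80 * α < ((j : ℕ) + 1) * (n : ℤ) := by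
    intro z hz
    have hX : z * 4720 / n < 4720 := by
      rw [Nat.div_lt_iff_lt_mul hn]; omega
    have h1 := Nat.div_mul_le_self (z * 4720) n
    have h2 := Nat.lt_div_mul_add (a := z * 4720) hn
    generalize hXd : z * 4720 / n = X at *
    have hj : X % 80 < 80 := Nat.mod_lt _ (by norm_num)
    have hXe : X / 80 * 80 + X % 80 = X := Nat.div_add_mod' X 80
    have hA : X / 80 < 59 := by omega
    generalize X / 80 = A at *
    generalize X % 80 = j at *
    subst hXe
    zify at h1 h2 hj
    have hnz : (0 : ℤ) < n := by exact_mod_cast hn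
    have hjn : (j : ℤ) * n ≤ 79 * n := by gcongr; omega
    have hjn' : 0 ≤ (j : ℤ) * n := by positivity
    refine ⟨A, hA, j, by exact_mod_cast hj, z * 59 - n * A, ?_, by ring, ?_, ?_, ?_, ?_⟩
    · simp [fineCell, hz, hXd]
    all_goals nlinarith
  obtain ⟨A, hA, j, hj, α, hxc, hxA, hα, hα', hjα, hjα'⟩ := key x hx
  obtain ⟨D, hD, k, hk, δ, hyc, hyD, hδ, hδ', hkδ, hkδ'⟩ := key y hy
  obtain ⟨r, hr, ⟨hr1, hr2⟩, hr3, hr4⟩ := exists_right_shift hα hα' hδ hδ'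
  obtain ⟨l, hl, ⟨hl1, hl2⟩, hl3, hl4⟩ := exists_left_shift hα hα' hδ hδ'
  obtain ⟨hl5, hl6⟩ := le_two_of_mem_sideShifts hl
  refine ⟨(l, r), Finset.mk_mem_product hl hr, A, hA, D, hD, j, hj, k, hk, ?_, ?_, hxc, hyc⟩
  · have e0 : arc n x = A := by
      have := arc_add_mul hn hxA hyD (s := 0) (e := 0) (by omega) (by omega)
      simp only [zero_mul, add_zero] at this
      omega
    have e1 := arc_add_mul hn hxA hyD (s := 1) (e := r.1) (by linarith) (by linarith)
    have e2 := arc_add_mul hn hxA hyD (s := 2) (e := r.2) (by linarith) (by linarith)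
    have e3 := arc_add_mul hn hxA hyD (s := -1) (e := -l.1) (by linarith) (by linarith)
    have e4 := arc_add_mul hn hxA hyD (s := -2) (e := -l.2) (by linarith) (by linarith)
    have c := fun s h1 h2 => intColor_eq_iff.1 (h s h1 h2)
    have c1 := c 1 (by norm_num) (by norm_num)
    have c2 := c 2 (by norm_num) (by norm_num)
    have c3 := c (-1) (by norm_num) (by norm_num)
    have c4 := c (-2) (by norm_num) (by norm_num)
    rw [e0] at c1 c2 c3 c4
    simp only [monoTest, Bool.and_eq_true, beq_iff_eq]
    refine ⟨⟨⟨?_, ?_⟩, ?_⟩, ?_⟩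
    · rw [← c3, e3]; exact arcBit_congr (by omega)
    · rw [← c1, e1]; exact arcBit_congr (by omega)
    · rw [← c4, e4]; exact arcBit_congr (by omega)
    · rw [← c2, e2]; exact arcBit_congr (by omega)
  · have hnz : (0 : ℤ) < n := by exact_mod_cast hn
    have cancel : ∀ a b : ℕ, (a : ℤ) * n < b * n → a < b := fun a b hab => by
      exact_mod_cast lt_of_mul_lt_mul_right hab hnz.le
    simp only [cellTest, Bool.and_eq_true, Nat.blt_eq]
    refine ⟨⟨⟨⟨⟨⟨⟨?_, ?_⟩, ?_⟩, ?_⟩, ?_⟩, ?_⟩, ?_⟩, ?_⟩ <;>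
      (apply cancel; push_cast; linarith)

theorem exists_shift_of_arcColoring {n : ℕ} [NeZero n] {a d : ZMod n}
    (h : ∀ i < 5, arcColoring n (a + i • d) = arcColoring n a) :
    ∃ w ∈ sideShifts ×ˢ sideShifts, ∃ A < 59, ∃ D < 59, ∃ j < 80, ∃ k < 80,
      monoTest w A D = true ∧ cellTest w j k = true ∧
      (a + 2 * d).val ∈ fineCell n (A * 80 + j) ∧ d.val ∈ fineCell n (D * 80 + k) := by
  have hcol : ∀ t : ℤ, -2 ≤ t → t ≤ 2 →
      intColor n ((a + 2 * d).val + t * d.val) = arcColoring n a := fun t ht ht' => by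
    rw [← h (t + 2).toNat (by omega), ← arcColoring_intCast]
    congr 1
    have ht2 : (((t + 2).toNat : ℤ) : ZMod n) = t + 2 := by
      rw [Int.toNat_of_nonneg (by omega)]; push_cast; ring
    rw [nsmul_eq_mul, ← Int.cast_natCast (t + 2).toNat, ht2]
    push_cast
    simp only [ZMod.natCast_val, ZMod.cast_id', id_eq]
    ring
  have hmid : intColor n (a + 2 * d).val = arcColoring n a := by
    simpa using hcol 0 (by norm_num) (by norm_num)
  exact exists_shift_of_mono (ZMod.val_lt (a + 2 * d)) (ZMod.val_lt d)
    fun s hs hs' => (hcol s hs hs').trans hmid.symm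

set_option maxRecDepth 4000 in
theorem monoAPCount_arcColoring_le {n : ℕ} (hn : 0 < n) :
    monoAPCount n 5 (arcColoring n) ≤ 1231812 * (n / 4720 + 1) ^ 2 := by
  have : NeZero n := ⟨hn.ne'⟩
  let boxes (f : ℕ → ℕ → Bool) (m : ℕ) : Finset (ℕ × ℕ) :=
    {p ∈ Finset.range m ×ˢ Finset.range m | f p.1 p.2 = true}
  let T (P C : ℕ × ℕ) : Finset (ZMod n × ZMod n) :=
    (fineCell n (P.1 * 80 + C.1) ×ˢ fineCell n (P.2 * 80 + C.2)).image
      fun p => ((p.1 : ZMod n) - 2 * (p.2 : ZMod n), (p.2 : ZMod n))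
  have hT : ∀ P C, (T P C).card ≤ (n / 4720 + 1) ^ 2 := fun P C => by
    refine Finset.card_image_le.trans ?_
    rw [Finset.card_product, sq]
    exact Nat.mul_le_mul (card_fineCell_le _ _) (card_fineCell_le _ _)
  obtain ⟨U, hU⟩ : ∃ U : Finset (ZMod n × ZMod n), U = (sideShifts ×ˢ sideShifts).biUnion fun w =>
      (boxes (monoTest w) 59 ×ˢ boxes (cellTest w) 80).biUnion fun q => T q.1 q.2 := ⟨_, rfl⟩
  have hsub : {p : ZMod n × ZMod n |
      ∀ i < 5, arcColoring n (p.1 + i • p.2) = arcColoring n p.1} ⊆ (U : Set _) := by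
    rintro ⟨a, d⟩ h
    simp only [Set.mem_ofPred_eq] at h
    have hb : a = ((a + 2 * d).val : ZMod n) - 2 * (d.val : ZMod n) := by
      simp only [ZMod.natCast_val, ZMod.cast_id', id_eq]; ring
    obtain ⟨w, hw, A, hA, D, hD, j, hj, k, hk, hm, hc, hx, hy⟩ := exists_shift_of_arcColoring h
    rw [Finset.mem_coe, hU, Finset.mem_biUnion]
    refine ⟨w, hw, Finset.mem_biUnion.2 ⟨((A, D), (j, k)), ?_, Finset.mem_image.2
      ⟨((a + 2 * d).val, d.val), Finset.mk_mem_product hx hy, ?_⟩⟩⟩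
    · simp [boxes, hA, hD, hj, hk, hm, hc]
    · rw [Prod.mk.injEq]
      exact ⟨hb.symm, by simp⟩
  calc monoAPCount n 5 (arcColoring n) ≤ (U : Set (ZMod n × ZMod n)).ncard :=
        Set.ncard_le_ncard hsub (Finset.finite_toSet U)
    _ = U.card := Set.ncard_coe_finset U
    _ ≤ ∑ w ∈ sideShifts ×ˢ sideShifts,
          (pairCount (monoTest w) 59 * pairCount (cellTest w) 80) * (n / 4720 + 1) ^ 2 := by
        rw [hU]
        refine Finset.card_biUnion_le.trans (Finset.sum_le_sum fun w _ => ?_)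
        refine (Finset.card_biUnion_le_card_mul _ _ _ fun q _ => hT q.1 q.2).trans_eq ?_
        rw [Finset.card_product, pairCount_eq_card, pairCount_eq_card]
    _ = 1231812 * (n / 4720 + 1) ^ 2 := by
        rw [← Finset.sum_mul, sum_pairCount_mul_pairCount]

end ArithProgColoring

theorem m5_upper_bound_even :
    ∀ ε : ℝ, 0 < ε → ∃ N : ℕ, ∀ n : ℕ, N ≤ n → Even n →
      ∃ c : ZMod n → Fin 2, (monoAPCount n 5 c : ℝ) ≤ (3647 / 65712 + ε) * (n : ℝ) ^ 2 := by
  intro ε hε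
  refine ⟨4000000, fun n hn _ => ⟨ArithProgColoring.arcColoring n, ?_⟩⟩
  have hcount : (monoAPCount n 5 (ArithProgColoring.arcColoring n) : ℝ) ≤
      1231812 * (((n / 4720 : ℕ) : ℝ) + 1) ^ 2 := by
    exact_mod_cast ArithProgColoring.monoAPCount_arcColoring_le (n := n) (by omega)
  have hdiv : ((n / 4720 : ℕ) : ℝ) ≤ n / 4720 := Nat.cast_div_le
  have hn' : (4000000 : ℝ) ≤ n := by exact_mod_cast hn
  have hq : ((n / 4720 : ℕ) : ℝ) + 1 ≤ n / 4720 * (1 + 4720 / 4000000) := by linarith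
  calc (monoAPCount n 5 (ArithProgColoring.arcColoring n) : ℝ)
      ≤ 1231812 * (n / 4720 * (1 + 4720 / 4000000)) ^ 2 := by
        refine hcount.trans ?_
        gcongr
    _ ≤ (3647 / 65712 + ε) * (n : ℝ) ^ 2 := by
        nlinarith [sq_nonneg (n : ℝ), mul_nonneg hε.le (sq_nonneg (n : ℝ))]
end
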